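/- arXiv:math/0503307 — 6 statements merged into one kernel-verified Lean document; each statement's English description precedes it below -/
import Mathlib

section
/- Let k ≥ 1 and let α be a partition of ℓ ≥ 0. The number of pairs (T, π), where T is a partial standard tableau of shape α with labels in {1, …, k} and π is a permutation of {1, …, k} such that every non-trivial cycle of π is decreasing, every fixed point of π is a label of a cell of T, and every label of T is the greatest element of its cycle in π, equals f^{α} · Σ_{m₁=0}^{ℓ} [ C(k, m₁) · Σ_{m₂ = ℓ − m₁}^{⌊(k − m₁)/2⌋} C(m₂, ℓ − m₁) · p₂(k − m₁, m₂) ], where C(a,b) denotes a binomial coefficient. -/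
open Finset

namespace KroneckerPaper

/-- A (removable) corner of a Young diagram: a cell with no cell below it nor to its right
(in English notation; equivalently, in French notation, a cell at the right end of its row
with no cell above it). -/
def IsCorner (μ : YoungDiagram) (c : ℕ × ℕ) : Prop :=
  c ∈ μ ∧ (c.1 + 1, c.2) ∉ μ ∧ (c.1, c.2 + 1) ∉ μ

/-- The *first corner* of a Young diagram: the unique corner lying on a row of maximal
length. -/
def IsFirstCorner (μ : YoungDiagram) (c : ℕ × ℕ) : Prop :=
  IsCorner μ c ∧ μ.rowLen c.1 = μ.rowLen 0

/-- `μ'` is obtained from `μ` by adding one new cell which is a corner of `μ'`. -/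
def AddCorner (μ μ' : YoungDiagram) : Prop :=
  ∃ c, IsCorner μ' c ∧ c ∉ μ.cells ∧ μ'.cells = insert c μ.cells

/-- `μ'` is obtained from `μ` by removing one corner of `μ`. -/
def RemoveCorner (μ μ' : YoungDiagram) : Prop :=
  ∃ c, IsCorner μ c ∧ μ'.cells = μ.cells.erase c

/-- `μ' ≠ μ` *differs from `μ` by the position of a corner*: it is obtained from `μ` by
removing a corner of `μ` and adding a new cell which is a corner of `μ'`. -/
def MoveCorner (μ μ' : YoungDiagram) : Prop :=
  μ' ≠ μ ∧ ∃ c c', IsCorner μ c ∧ IsCorner μ' c' ∧ c' ∉ μ.cells.erase c ∧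
    μ'.cells = insert c' (μ.cells.erase c)

/-- The one-row Young diagram `(n)`. -/
def rowDiagram (n : ℕ) : YoungDiagram :=
  YoungDiagram.ofRowLens [n] (List.pairwise_singleton _ n).sortedGE

/-- The Young diagram obtained by deleting the first (longest) row, i.e. the truncated
partition `λ̄ = (λ₂, …, λ_m)` of `λ = (λ₁, λ₂, …, λ_m)`. -/
def truncate (μ : YoungDiagram) : YoungDiagram where
  cells := (μ.cells.filter fun c => 1 ≤ c.1).image fun c => (c.1 - 1, c.2)
  isLowerSet := by
    rintro ⟨i1, j1⟩ ⟨i2, j2⟩ ⟨hi, hj⟩ h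
    simp only [Finset.coe_image, Finset.coe_filter, Set.mem_image, Set.mem_setOf_eq,
      Finset.mem_coe, YoungDiagram.mem_cells] at h ⊢
    obtain ⟨⟨a, b⟩, ⟨ha, ha1⟩, heq⟩ := h
    simp only [Prod.mk.injEq] at heq
    exact ⟨(i2 + 1, j2), ⟨μ.up_left_mem (by omega) (by omega) ha, by omega⟩, by simp⟩

/-- A *Kronecker tableau* of length `k`, initial shape `μ` and final shape `lam`:
a sequence `μ⁰ = μ, μ¹, …, μ^k = lam` of diagrams such that each `μ^{i+1}` either differs
from `μ^i` by the position of a corner, or equals `μ^i` together with the datum of a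
distinguished corner of `μ^{i+1}` other than its first corner. -/
structure KroneckerTableau (k : ℕ) (μ lam : YoungDiagram) where
  seq : Fin (k + 1) → YoungDiagram
  dist : Fin k → Option (ℕ × ℕ)
  init : seq 0 = μ
  final : seq (Fin.last k) = lam
  step : ∀ i : Fin k,
    (MoveCorner (seq i.castSucc) (seq i.succ) ∧ dist i = none) ∨
    (seq i.succ = seq i.castSucc ∧
      ∃ c, dist i = some c ∧ IsCorner (seq i.succ) c ∧ ¬ IsFirstCorner (seq i.succ) c)

/-- A *partial standard tableau* of shape `α` with labels in `{1, …, k}`: a labelling of the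
cells of `α` by pairwise distinct integers of `{1, …, k}` increasing along rows and columns
(cells outside `α` are labelled `0` by convention). -/
structure PartialST (α : YoungDiagram) (k : ℕ) where
  label : ℕ × ℕ → ℕ
  mem_of_cell : ∀ c ∈ α, label c ∈ Finset.Icc 1 k
  zero_of_not_cell : ∀ c, c ∉ α → label c = 0
  injOn : ∀ c ∈ α, ∀ c' ∈ α, label c = label c' → c = c'
  row_incr : ∀ i j1 j2 : ℕ, j1 < j2 → (i, j2) ∈ α → label (i, j1) < label (i, j2)
  col_incr : ∀ i1 i2 j : ℕ, i1 < i2 → (i2, j) ∈ α → label (i1, j) < label (i2, j)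

/-- `f^α`, the number of standard Young tableaux of shape `α`. -/
noncomputable def fSYT (α : YoungDiagram) : ℕ :=
  Nat.card (PartialST α α.card)

/-- `p₂ n k`: the number of partitions of an `n`-element set into exactly `k` blocks, each of
size at least `2` (associated Stirling numbers of the second kind). -/
noncomputable def p2 (n k : ℕ) : ℕ :=
  Nat.card {P : Finpartition (Finset.univ : Finset (Fin n)) //
    P.parts.card = k ∧ ∀ b ∈ P.parts, 2 ≤ b.card}

/-- Every non-trivial cycle of `π` is *decreasing*: `π x < x` for every element `x` of a
non-trivial cycle which is not the minimum of its cycle. -/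
def DecCycles {S : Type*} [LinearOrder S] (π : Equiv.Perm S) : Prop :=
  ∀ x, π x ≠ x → (∃ y, π.SameCycle x y ∧ y < x) → π x < x

/-- A pair `(T, π)` of a partial standard tableau of shape `α` with labels in `{1, …, k}`
and a permutation `π` of `{1, …, k}` all of whose non-trivial cycles are decreasing, such
that every fixed point of `π` is a label of `T` and every label of `T` is the greatest
element of its cycle in `π`. -/
structure TabPerm (k : ℕ) (α : YoungDiagram) where
  T : PartialST α k
  π : Equiv.Perm ℕ
  perm_of : ∀ x : ℕ, x ∉ Finset.Icc 1 k → π x = x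
  dec : DecCycles π
  fix_mem : ∀ x ∈ Finset.Icc 1 k, π x = x → ∃ c ∈ α, T.label c = x
  label_max : ∀ c ∈ α, ∀ y : ℕ, π.SameCycle (T.label c) y → y ≤ T.label c

/-!
A permutation of a finite linear order whose non-trivial cycles are decreasing is determined by the
partition of the set into its cycles: every element is sent to its predecessor in its block, the
least element of a block to the greatest one. Conversely every partition arises in this way, and
the fixed points are the blocks of size one. Once the `m₁` fixed points are chosen, the permutations
with `m₂` non-trivial cycles are therefore counted by `p₂(k - m₁, m₂)`. The labels of the tableau
have to be the `m₁` fixed points and `ℓ - m₁` of the `m₂` maxima of the non-trivial cycles, and by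
relabelling there are `f^α` partial standard tableaux with a given set of labels.
-/

open Equiv.Perm (SameCycle)

variable {X Y : Type*}

section CyclicPred

variable [LinearOrder X] {b : Finset X} {x y : X}

/-- The *cyclic predecessor* of `x` in `b`: the next smaller element of `b` or, if there is none,
the greatest element of `b`. It is `x` itself when `b` is empty, so that the cyclic predecessor in
the block of a partition of `s` fixes the points outside `s`. -/
def cyclicPred (b : Finset X) (x : X) : X :=
  if hlt : {z ∈ b | z < x}.Nonempty then {z ∈ b | z < x}.max' hlt
  else if hb : b.Nonempty then b.max' hb else x

@[simp]
lemma cyclicPred_empty (x : X) : cyclicPred ∅ x = x := by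
  simp [cyclicPred]

lemma isGreatest_cyclicPred_of_lt (hy : y ∈ b) (hyx : y < x) :
    IsGreatest {z | z ∈ b ∧ z < x} (cyclicPred b x) := by
  have hlt : {z ∈ b | z < x}.Nonempty := ⟨y, mem_filter.2 ⟨hy, hyx⟩⟩
  simpa [cyclicPred, hlt] using isGreatest_max' _ hlt

lemma isGreatest_cyclicPred_of_isLeast (hx : IsLeast (b : Set X) x) :
    IsGreatest (b : Set X) (cyclicPred b x) := by
  have hlt : ¬ {z ∈ b | z < x}.Nonempty := by
    rintro ⟨z, hz⟩
    exact (hx.2 (mem_filter.1 hz).1).not_gt (mem_filter.1 hz).2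
  simpa [cyclicPred, hlt, show b.Nonempty from ⟨x, hx.1⟩] using isGreatest_max' b ⟨x, hx.1⟩

lemma isLeast_or_exists_lt (hx : x ∈ b) : IsLeast (b : Set X) x ∨ ∃ y ∈ b, y < x := by
  by_cases h : ∃ y ∈ b, y < x
  · exact .inr h
  · exact .inl ⟨hx, fun y hy => not_lt.1 fun hyx => h ⟨y, hy, hyx⟩⟩

lemma cyclicPred_mem (hx : x ∈ b) : cyclicPred b x ∈ b := by
  rcases isLeast_or_exists_lt hx with hx | ⟨y, hy, hyx⟩
  · exact (isGreatest_cyclicPred_of_isLeast hx).1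
  · exact (isGreatest_cyclicPred_of_lt hy hyx).1.1

lemma cyclicPred_ne_of_lt (hx : x ∈ b) (hy : y ∈ b) (hxy : x < y) :
    cyclicPred b x ≠ cyclicPred b y := by
  have hxpred : x ≤ cyclicPred b y := (isGreatest_cyclicPred_of_lt hx hxy).2 ⟨hx, hxy⟩
  rcases isLeast_or_exists_lt hx with hmin | ⟨z, hz, hzx⟩
  · have hle : y ≤ cyclicPred b x := (isGreatest_cyclicPred_of_isLeast hmin).2 hy
    exact ((isGreatest_cyclicPred_of_lt hx hxy).1.2.trans_le hle).ne'
  · exact ((isGreatest_cyclicPred_of_lt hz hzx).1.2.trans_le hxpred).ne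

lemma cyclicPred_injOn (b : Finset X) : Set.InjOn (cyclicPred b) b := by
  intro x hx y hy h
  by_contra hne
  rcases lt_or_gt_of_ne hne with hxy | hyx
  · exact cyclicPred_ne_of_lt hx hy hxy h
  · exact cyclicPred_ne_of_lt hy hx hyx h.symm

end CyclicPred

lemma eq_of_sameCycle_of_invariant {π : Equiv.Perm X} {f : X → Y} (hf : ∀ x, f (π x) = f x)
    {x y : X} (hxy : SameCycle π x y) : f x = f y := by
  obtain ⟨i, rfl⟩ := hxy
  induction i with
  | zero => simp
  | succ n ih => rw [add_comm, zpow_add, Equiv.Perm.mul_apply, zpow_one, hf, ih]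
  | pred n ih =>
    rw [ih, ← hf ((π ^ (-(n : ℤ) - 1)) x), ← Equiv.Perm.mul_apply, ← zpow_one_add]
    simp

lemma mem_of_sameCycle_of_ne {s : Finset X} {π : Equiv.Perm X} {x y : X}
    (hs : ∀ x ∉ s, π x = x) (hxy : SameCycle π x y) (hne : x ≠ y) : x ∈ s ∧ y ∈ s :=
  ⟨not_imp_comm.1 (fun hx => hxy.eq_of_left (hs x hx)) hne,
    not_imp_comm.1 (fun hy => hxy.eq_of_right (hs y hy)) hne⟩

section CyclicPredPerm

variable [LinearOrder X] {s : Finset X} (P : Finpartition s) {x y : X}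

lemma part_cyclicPred_part (x : X) : P.part (cyclicPred (P.part x) x) = P.part x := by
  by_cases hx : x ∈ s
  · exact P.part_eq_of_mem (P.part_mem.2 hx) (cyclicPred_mem (P.mem_part hx))
  · simp [P.part_eq_empty.2 hx]

lemma cyclicPred_part_injective : Function.Injective fun x => cyclicPred (P.part x) x := by
  intro x y (h : cyclicPred (P.part x) x = cyclicPred (P.part y) y)
  have hpart : P.part x = P.part y := by
    rw [← part_cyclicPred_part P x, h, part_cyclicPred_part P y]
  by_cases hx : x ∈ s
  · have hy : y ∈ s := by rwa [← P.part_nonempty, ← hpart, P.part_nonempty]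
    rw [hpart] at h
    exact cyclicPred_injOn _ (hpart ▸ P.mem_part hx) (P.mem_part hy) h
  · have hy : P.part y = ∅ := hpart ▸ P.part_eq_empty.2 hx
    simpa [P.part_eq_empty.2 hx, hy] using h

lemma cyclicPred_part_surjective : Function.Surjective fun x => cyclicPred (P.part x) x := by
  intro y
  by_cases hy : y ∈ s
  · have hmaps : Set.MapsTo (fun x => cyclicPred (P.part x) x) s s := fun x hx =>
      P.part_subset x (cyclicPred_mem (P.mem_part hx))
    obtain ⟨x, -, hx⟩ := surjOn_of_injOn_of_card_le _ hmaps
      (cyclicPred_part_injective P).injOn le_rfl hy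
    exact ⟨x, hx⟩
  · exact ⟨y, by simp [P.part_eq_empty.2 hy]⟩

/-- The permutation attached to a partition of a finite set: on each block it is the cycle which
sends every element to its predecessor and the least element to the greatest one. -/
noncomputable def cyclicPredPerm : Equiv.Perm X :=
  Equiv.ofBijective _ ⟨cyclicPred_part_injective P, cyclicPred_part_surjective P⟩

lemma cyclicPredPerm_apply (x : X) : cyclicPredPerm P x = cyclicPred (P.part x) x := rfl

lemma cyclicPredPerm_apply_of_notMem (hx : x ∉ s) : cyclicPredPerm P x = x := by
  simp [cyclicPredPerm_apply, P.part_eq_empty.2 hx]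

lemma part_eq_of_sameCycle_cyclicPredPerm (h : SameCycle (cyclicPredPerm P) x y) :
    P.part x = P.part y :=
  eq_of_sameCycle_of_invariant (part_cyclicPred_part P) h

lemma exists_isLeast_part_sameCycle (hx : x ∈ s) :
    ∃ m, IsLeast (P.part x : Set X) m ∧ SameCycle (cyclicPredPerm P) x m := by
  refine (s.finite_toSet.wellFoundedOn (r := (· < ·))).induction
    (P := fun x => ∃ m, IsLeast (P.part x : Set X) m ∧ SameCycle (cyclicPredPerm P) x m)
    hx fun x hx ih => ?_
  rcases isLeast_or_exists_lt (P.mem_part hx) with hmin | ⟨y, hy, hyx⟩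
  · exact ⟨x, hmin, .rfl⟩
  · obtain ⟨hmem, hlt⟩ := (isGreatest_cyclicPred_of_lt hy hyx).1
    obtain ⟨m, hm, hcycle⟩ := ih _ (P.part_subset x hmem) hlt
    rw [part_cyclicPred_part] at hm
    exact ⟨m, hm, Equiv.Perm.sameCycle_apply_left.1 hcycle⟩

lemma sameCycle_cyclicPredPerm_iff (hx : x ∈ s) :
    SameCycle (cyclicPredPerm P) x y ↔ y ∈ P.part x := by
  constructor
  · intro h
    have hpart := part_eq_of_sameCycle_cyclicPredPerm P h
    have hy : y ∈ s := by rwa [← P.part_nonempty, ← hpart, P.part_nonempty]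
    exact hpart ▸ P.mem_part hy
  · intro h
    have hy := P.part_subset x h
    obtain ⟨m, hm, hxm⟩ := exists_isLeast_part_sameCycle P hx
    obtain ⟨m', hm', hym'⟩ := exists_isLeast_part_sameCycle P hy
    rw [P.part_eq_of_mem (P.part_mem.2 hx) h] at hm'
    exact hxm.trans (hm.unique hm' ▸ hym'.symm)

lemma decCycles_cyclicPredPerm : DecCycles (cyclicPredPerm P) := by
  rintro x hfix ⟨y, hxy, hyx⟩
  have hx : x ∈ s := not_imp_comm.1 (cyclicPredPerm_apply_of_notMem P) hfix
  exact (isGreatest_cyclicPred_of_lt ((sameCycle_cyclicPredPerm_iff P hx).1 hxy) hyx).1.2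

end CyclicPredPerm

section CyclePartition

variable [LinearOrder X] {s : Finset X} {π : Equiv.Perm X} {x y : X}

open Classical in
/-- The partition of `s` into the traces on `s` of the cycles of `π`. -/
noncomputable def cyclePartition (s : Finset X) (π : Equiv.Perm X) : Finpartition s :=
  Finpartition.ofSetSetoid (SameCycle.setoid π) s

lemma mem_part_cyclePartition :
    y ∈ (cyclePartition s π).part x ↔ x ∈ s ∧ y ∈ s ∧ SameCycle π x y := by
  classical
  exact Finpartition.mem_part_ofSetSetoid_iff_rel s

lemma mem_part_cyclePartition_iff_sameCycle (hs : ∀ x ∉ s, π x = x) (hx : x ∈ s) :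
    y ∈ (cyclePartition s π).part x ↔ SameCycle π x y := by
  refine ⟨fun h => (mem_part_cyclePartition.1 h).2.2,
    fun h => mem_part_cyclePartition.2 ⟨hx, ?_, h⟩⟩
  by_cases hxy : x = y
  · exact hxy ▸ hx
  · exact (mem_of_sameCycle_of_ne hs h hxy).2

lemma DecCycles.apply_lt (hπ : DecCycles π) (hxy : SameCycle π x y) (hyx : y < x) : π x < x :=
  hπ x (fun hfix => hyx.ne' (hxy.eq_of_left hfix)) ⟨y, hxy, hyx⟩

/- If `π` skipped an element between `π x` and `x`, the least such element `w` would by induction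
also be sent to `π x`. -/
lemma DecCycles.le_apply_of_lt (hπ : DecCycles π) (hs : ∀ x ∉ s, π x = x)
    (hxy : SameCycle π x y) (hyx : y < x) : y ≤ π x := by
  refine (s.finite_toSet.wellFoundedOn (r := (· < ·))).induction
    (P := fun x => ∀ y, SameCycle π x y → y < x → y ≤ π x)
    (mem_of_sameCycle_of_ne hs hxy hyx.ne').1 (fun x hx ih y hxy hyx => ?_) y hxy hyx
  by_contra! hlt
  have hne : {w ∈ (cyclePartition s π).part x | π x < w}.Nonempty :=
    ⟨y, mem_filter.2 ⟨(mem_part_cyclePartition_iff_sameCycle hs hx).2 hxy, hlt⟩⟩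
  obtain ⟨w, hw, hmin⟩ := exists_min_image _ id hne
  simp only [mem_filter, mem_part_cyclePartition_iff_sameCycle hs hx, id] at hw hmin
  obtain ⟨hxw, hlt_w⟩ := hw
  have hwx : w < x := (hmin y ⟨hxy, hlt⟩).trans_lt hyx
  have hw_mem : w ∈ s := (mem_of_sameCycle_of_ne hs hxw hwx.ne').2
  have hcycle : SameCycle π w (π x) := Equiv.Perm.sameCycle_apply_right.2 hxw.symm
  have hle : π x ≤ π w := ih w hw_mem hwx _ hcycle hlt_w
  have hge : π w ≤ π x := by
    by_contra! h
    exact (hmin _ ⟨Equiv.Perm.sameCycle_apply_right.2 hxw, h⟩).not_gt (hπ.apply_lt hcycle hlt_w)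
  exact hwx.ne (π.injective (hge.antisymm hle))

lemma DecCycles.isGreatest_apply_of_isLeast (hπ : DecCycles π) (hs : ∀ x ∉ s, π x = x)
    (hx : IsLeast ((cyclePartition s π).part x : Set X) x) :
    IsGreatest ((cyclePartition s π).part x : Set X) (π x) := by
  have hxs : x ∈ s := (mem_part_cyclePartition.1 hx.1).1
  obtain ⟨M, hM, hmax⟩ := exists_max_image ((cyclePartition s π).part x) id ⟨x, hx.1⟩
  have hM_greatest : IsGreatest ((cyclePartition s π).part x : Set X) M := ⟨hM, hmax⟩
  obtain ⟨u, rfl⟩ := π.surjective M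
  have hxu : SameCycle π x u := Equiv.Perm.sameCycle_apply_right.1
    ((mem_part_cyclePartition_iff_sameCycle hs hxs).1 hM)
  have hu : u ∈ (cyclePartition s π).part x :=
    (mem_part_cyclePartition_iff_sameCycle hs hxs).2 hxu
  obtain rfl | hlt := (hx.2 hu).eq_or_lt
  · exact hM_greatest
  · exact absurd (hπ.apply_lt hxu.symm hlt) (hM_greatest.2 hu).not_gt

lemma DecCycles.apply_eq_cyclicPred (hπ : DecCycles π) (hs : ∀ x ∉ s, π x = x) (x : X) :
    π x = cyclicPred ((cyclePartition s π).part x) x := by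
  by_cases hx : x ∈ s
  · have hmem {y : X} := mem_part_cyclePartition_iff_sameCycle (y := y) hs hx
    rcases isLeast_or_exists_lt ((cyclePartition s π).mem_part hx) with hmin | ⟨y, hy, hyx⟩
    · exact (hπ.isGreatest_apply_of_isLeast hs hmin).unique
        (isGreatest_cyclicPred_of_isLeast hmin)
    · have hπx : IsGreatest {z | z ∈ (cyclePartition s π).part x ∧ z < x} (π x) :=
        ⟨⟨hmem.2 (Equiv.Perm.sameCycle_apply_right.2 .rfl), hπ.apply_lt (hmem.1 hy) hyx⟩,
          fun z hz => hπ.le_apply_of_lt hs (hmem.1 hz.1) hz.2⟩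
      exact hπx.unique (isGreatest_cyclicPred_of_lt hy hyx)
  · rw [(cyclePartition s π).part_eq_empty.2 hx, cyclicPred_empty, hs x hx]

end CyclePartition

lemma finpartition_eq_of_part_eq [DecidableEq X] {s : Finset X} {P Q : Finpartition s}
    (h : ∀ x ∈ s, P.part x = Q.part x) : P = Q := by
  have hparts (R : Finpartition s) : R.parts = s.image R.part := by
    ext b
    refine ⟨fun hb => ?_, fun hb => ?_⟩
    · obtain ⟨x, hx⟩ := R.nonempty_of_mem_parts hb
      exact mem_image.2 ⟨x, R.le hb hx, R.part_eq_of_mem hb hx⟩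
    · obtain ⟨x, hx, rfl⟩ := mem_image.1 hb
      exact R.part_mem.2 hx
  ext1
  rw [hparts, hparts, image_congr h]

section DecPerms

variable [LinearOrder X] {s : Finset X} {π : Equiv.Perm X}

lemma cyclePartition_cyclicPredPerm (P : Finpartition s) :
    cyclePartition s (cyclicPredPerm P) = P := by
  refine finpartition_eq_of_part_eq fun x hx => ?_
  ext y
  rw [mem_part_cyclePartition_iff_sameCycle (fun _ => cyclicPredPerm_apply_of_notMem P) hx,
    sameCycle_cyclicPredPerm_iff P hx]

lemma DecCycles.cyclicPredPerm_cyclePartition (hπ : DecCycles π) (hs : ∀ x ∉ s, π x = x) :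
    cyclicPredPerm (cyclePartition s π) = π :=
  Equiv.ext fun x => (hπ.apply_eq_cyclicPred hs x).symm

lemma finite_setOf_decCycles (s : Finset X) :
    {π : Equiv.Perm X | DecCycles π ∧ ∀ x ∉ s, π x = x}.Finite :=
  (Set.finite_range (cyclicPredPerm (s := s))).subset fun _ hπ =>
    ⟨_, hπ.1.cyclicPredPerm_cyclePartition hπ.2⟩

/-- The permutations of `s` all of whose non-trivial cycles are decreasing. Permutations of `s` are
encoded as the permutations of the ambient type which fix the points outside `s`. -/
noncomputable def decPerms (s : Finset X) : Finset (Equiv.Perm X) :=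
  (finite_setOf_decCycles s).toFinset

@[simp]
lemma mem_decPerms : π ∈ decPerms s ↔ DecCycles π ∧ ∀ x ∉ s, π x = x := by
  simp [decPerms]

lemma cyclicPredPerm_mem_decPerms (P : Finpartition s) : cyclicPredPerm P ∈ decPerms s :=
  mem_decPerms.2 ⟨decCycles_cyclicPredPerm P, fun _ => cyclicPredPerm_apply_of_notMem P⟩

end DecPerms

section Transport

variable [DecidableEq X] {u : Finset Y}

lemma map_filter_mem_of_mem_parts {e : Y ↪ X} (Q : Finpartition (u.map e)) {b : Finset X}
    (hb : b ∈ Q.parts) : {y ∈ u | e y ∈ b}.map e = b := by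
  ext x
  simp only [mem_map, mem_filter]
  refine ⟨fun ⟨y, hy, hyx⟩ => hyx ▸ hy.2, fun hx => ?_⟩
  obtain ⟨y, hy, rfl⟩ := mem_map.1 (Q.le hb hx)
  exact ⟨y, ⟨hy, hx⟩, rfl⟩

variable [DecidableEq Y]

/-- The image of a partition of `u` under an embedding. -/
def mapFinpartition (e : Y ↪ X) (P : Finpartition u) : Finpartition (u.map e) :=
  .ofExistsUnique (P.parts.map (mapEmbedding e).toEmbedding)
    (by simpa using fun b hb => P.le hb)
    (by
      intro x hx
      obtain ⟨y, hy, rfl⟩ := mem_map.1 hx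
      obtain ⟨b, ⟨hb, hyb⟩, hunique⟩ := P.existsUnique_mem hy
      refine ⟨b.map e, by simpa [hyb] using hb, ?_⟩
      rintro _ ⟨hmap, hyc⟩
      obtain ⟨c, hc, rfl⟩ := mem_map.1 hmap
      exact congrArg (map e) (hunique c ⟨hc, by simpa using hyc⟩))
    (by simp)

lemma parts_mapFinpartition (e : Y ↪ X) (P : Finpartition u) :
    (mapFinpartition e P).parts = P.parts.map (mapEmbedding e).toEmbedding := rfl

lemma mapFinpartition_injective (e : Y ↪ X) :
    Function.Injective (mapFinpartition e : Finpartition u → _) := fun _ _ h =>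
  Finpartition.ext <| map_injective _ <| congrArg Finpartition.parts h

/-- The preimage of a partition of `u.map e` under `e`. -/
def comapFinpartition (e : Y ↪ X) (Q : Finpartition (u.map e)) : Finpartition u :=
  .ofExistsUnique (Q.parts.image fun b => {y ∈ u | e y ∈ b})
    (forall_mem_image.2 fun _ _ => filter_subset _ _)
    (by
      intro y hy
      obtain ⟨b, ⟨hb, hyb⟩, hunique⟩ := Q.existsUnique_mem (mem_map_of_mem e hy)
      refine ⟨_, ⟨mem_image_of_mem _ hb, by simp [hy, hyb]⟩, ?_⟩
      rintro _ ⟨himage, hyc⟩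
      obtain ⟨c, hc, rfl⟩ := mem_image.1 himage
      rw [hunique c ⟨hc, (mem_filter.1 hyc).2⟩])
    (by
      intro h
      obtain ⟨b, hb, hempty⟩ := mem_image.1 h
      exact Q.ne_empty hb (by rw [← map_filter_mem_of_mem_parts Q hb, hempty, map_empty]))

lemma mapFinpartition_comapFinpartition (e : Y ↪ X) (Q : Finpartition (u.map e)) :
    mapFinpartition e (comapFinpartition e Q) = Q := by
  ext1
  calc (Q.parts.image fun b => {y ∈ u | e y ∈ b}).map (mapEmbedding e).toEmbedding
      = (Q.parts.image fun b => {y ∈ u | e y ∈ b}).image (map e) := map_eq_image _ _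
    _ = Q.parts.image id := by
      rw [image_image]
      exact image_congr fun b hb => map_filter_mem_of_mem_parts Q hb
    _ = Q.parts := image_id

lemma mapFinpartition_bijective (e : Y ↪ X) :
    Function.Bijective (mapFinpartition e : Finpartition u → _) :=
  ⟨mapFinpartition_injective e, fun Q => ⟨_, mapFinpartition_comapFinpartition e Q⟩⟩

/-- The partitions of `t` into `m` blocks of size at least two; for `#t = n` there are `p2 n m`
of them. -/
def finpartitionsTwoLE (t : Finset X) (m : ℕ) : Finset (Finpartition t) :=
  {P | #P.parts = m ∧ ∀ b ∈ P.parts, 2 ≤ #b}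

lemma card_finpartitionsTwoLE_map (e : Y ↪ X) (u : Finset Y) (m : ℕ) :
    #(finpartitionsTwoLE (u.map e) m) = #(finpartitionsTwoLE u m) := by
  refine (card_bijective _ (mapFinpartition_bijective e) fun P => ?_).symm
  simp [finpartitionsTwoLE, parts_mapFinpartition]

lemma card_finpartitionsTwoLE_univ (n m : ℕ) :
    #(finpartitionsTwoLE (univ : Finset (Fin n)) m) = p2 n m :=
  (Nat.subtype_card _ (by simp [finpartitionsTwoLE])).symm

end Transport

lemma card_finpartitionsTwoLE [LinearOrder X] (t : Finset X) (m : ℕ) :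
    #(finpartitionsTwoLE t m) = p2 #t m := by
  have h := card_finpartitionsTwoLE_map (t.orderEmbOfFin rfl).toEmbedding univ m
  rwa [map_orderEmbOfFin_univ, card_finpartitionsTwoLE_univ] at h

section CycleMaxima

variable [LinearOrder X] {s A : Finset X} {π : Equiv.Perm X}

/-- The fixed points of `π` in `s`. -/
def fixedPts (s : Finset X) (π : Equiv.Perm X) : Finset X := {x ∈ s | π x = x}

open Classical in
/-- The elements of `s` which are the greatest elements of their cycles in `π`. -/
noncomputable def cycleMaxima (s : Finset X) (π : Equiv.Perm X) : Finset X :=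
  {x ∈ s | ∀ y, SameCycle π x y → y ≤ x}

lemma mem_cycleMaxima {x : X} :
    x ∈ cycleMaxima s π ↔ x ∈ s ∧ ∀ y, SameCycle π x y → y ≤ x := by
  simp [cycleMaxima]

lemma fixedPts_subset_cycleMaxima (s : Finset X) (π : Equiv.Perm X) :
    fixedPts s π ⊆ cycleMaxima s π := fun _ hx =>
  have hx := mem_filter.1 hx
  mem_cycleMaxima.2 ⟨hx.1, fun _ hxy => (hxy.eq_of_left hx.2).ge⟩

lemma card_cycleMaxima (hs : ∀ x ∉ s, π x = x) :
    #(cycleMaxima s π) = #(cyclePartition s π).parts := by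
  refine card_nbij (cyclePartition s π).part (fun x hx => ?_) (fun x hx y hy hxy => ?_)
    fun b hb => ?_
  · exact (cyclePartition s π).part_mem.2 (mem_cycleMaxima.1 hx).1
  · obtain ⟨hxs, hx⟩ := mem_cycleMaxima.1 hx
    obtain ⟨hys, hy⟩ := mem_cycleMaxima.1 hy
    have hcycle : SameCycle π x y := (mem_part_cyclePartition_iff_sameCycle hs hxs).1
      (hxy ▸ (cyclePartition s π).mem_part hys)
    exact (hy x hcycle.symm).antisymm (hx y hcycle)
  · obtain ⟨x, hx, hmax⟩ := exists_max_image b id ((cyclePartition s π).nonempty_of_mem_parts hb)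
    have hxs : x ∈ s := (cyclePartition s π).le hb hx
    obtain rfl := (cyclePartition s π).part_eq_of_mem hb hx
    exact ⟨x, mem_cycleMaxima.2 ⟨hxs, fun y hxy =>
      hmax y ((mem_part_cyclePartition_iff_sameCycle hs hxs).2 hxy)⟩, rfl⟩

lemma fixedPts_eq_empty_iff (hs : ∀ x ∉ s, π x = x) :
    fixedPts s π = ∅ ↔ ∀ b ∈ (cyclePartition s π).parts, 2 ≤ #b := by
  rw [fixedPts, filter_eq_empty_iff]
  refine ⟨fun h b hb => ?_, fun h x hx hfix => ?_⟩
  · obtain ⟨x, hx⟩ := (cyclePartition s π).nonempty_of_mem_parts hb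
    have hxs : x ∈ s := (cyclePartition s π).le hb hx
    obtain rfl := (cyclePartition s π).part_eq_of_mem hb hx
    exact one_lt_card.2 ⟨x, hx, π x, (mem_part_cyclePartition_iff_sameCycle hs hxs).2
      (Equiv.Perm.sameCycle_apply_right.2 .rfl), Ne.symm (h hxs)⟩
  · have hpart : (cyclePartition s π).part x ⊆ {x} := fun y hy =>
      mem_singleton.2 ((mem_part_cyclePartition.1 hy).2.2.eq_of_left hfix).symm
    have hcard := h _ ((cyclePartition s π).part_mem.2 hx)
    grind [card_le_card hpart]

lemma card_filter_fixedPts_eq_empty_card_cycleMaxima_eq (t : Finset X) (m : ℕ) :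
    #{π ∈ decPerms t | fixedPts t π = ∅ ∧ #(cycleMaxima t π) = m} = p2 #t m := by
  rw [← card_finpartitionsTwoLE]
  refine card_nbij' (cyclePartition t) cyclicPredPerm (fun π hπ => ?_) (fun P hP => ?_)
    (fun π hπ => ?_) fun P _ => cyclePartition_cyclicPredPerm P
  · obtain ⟨hmem, hfix, hcard⟩ := mem_filter.1 hπ
    have ht := (mem_decPerms.1 hmem).2
    rw [fixedPts_eq_empty_iff ht] at hfix
    rw [card_cycleMaxima ht] at hcard
    exact mem_filter.2 ⟨mem_univ _, hcard, hfix⟩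
  · obtain ⟨-, hcard, hP⟩ := mem_filter.1 hP
    have hmem := cyclicPredPerm_mem_decPerms P
    have ht := (mem_decPerms.1 hmem).2
    refine mem_filter.2 ⟨hmem, (fixedPts_eq_empty_iff ht).2 ?_, (card_cycleMaxima ht).trans ?_⟩
    · rwa [cyclePartition_cyclicPredPerm]
    · rwa [cyclePartition_cyclicPredPerm]
  · obtain ⟨hdec, ht⟩ := mem_decPerms.1 (mem_filter.1 hπ).1
    exact hdec.cyclicPredPerm_cyclePartition ht

lemma two_mul_card_cycleMaxima_le (hs : ∀ x ∉ s, π x = x) (hfix : fixedPts s π = ∅) :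
    2 * #(cycleMaxima s π) ≤ #s := by
  rw [card_cycleMaxima hs, mul_comm, ← (cyclePartition s π).sum_card_parts]
  exact card_nsmul_le_sum _ _ 2 ((fixedPts_eq_empty_iff hs).1 hfix)

lemma filter_fixedPts_eq (hA : A ⊆ s) :
    {π ∈ decPerms s | fixedPts s π = A} = {π ∈ decPerms (s \ A) | fixedPts (s \ A) π = ∅} := by
  ext π
  rw [mem_filter, mem_filter, mem_decPerms, mem_decPerms]
  simp only [fixedPts, Finset.ext_iff, mem_filter, mem_sdiff, notMem_empty]
  grind

lemma cycleMaxima_sdiff (s A : Finset X) (π : Equiv.Perm X) :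
    cycleMaxima (s \ A) π = cycleMaxima s π \ A := by
  ext x
  simp only [mem_cycleMaxima, mem_sdiff]
  tauto

end CycleMaxima

lemma sum_filter_card_le_powerset {M : Type*} [AddCommMonoid M] (s : Finset X) (ℓ : ℕ)
    (f : ℕ → M) :
    ∑ A ∈ s.powerset with #A ≤ ℓ, f #A = ∑ i ∈ range (ℓ + 1), (#s).choose i • f i := by
  rw [← sum_fiberwise_of_maps_to (g := card) (t := range (ℓ + 1)) (by simp)]
  refine sum_congr rfl fun i _ => ?_
  have hfiber : {A ∈ {A ∈ s.powerset | #A ≤ ℓ} | #A = i} = s.powersetCard i := by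
    ext A
    grind
  rw [hfiber, sum_powersetCard]

section AdmissibleLabels

variable [LinearOrder X] {s : Finset X} {ℓ : ℕ} {π : Equiv.Perm X}

/-- The sets of `ℓ` elements of `s` which can be the labels of a tableau paired with `π`: they
contain all fixed points of `π` and consist of greatest elements of cycles. -/
noncomputable def admissibleLabels (s : Finset X) (ℓ : ℕ) (π : Equiv.Perm X) :
    Finset (Finset X) :=
  {L ∈ (cycleMaxima s π).powersetCard ℓ | fixedPts s π ⊆ L}

lemma admissibleLabels_subset_powersetCard : admissibleLabels s ℓ π ⊆ s.powersetCard ℓ :=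
  (filter_subset _ _).trans (powersetCard_mono fun _ hx => (mem_cycleMaxima.1 hx).1)

lemma card_admissibleLabels (h : #(fixedPts s π) ≤ ℓ) :
    #(admissibleLabels s ℓ π) =
      (#(cycleMaxima (s \ fixedPts s π) π)).choose (ℓ - #(fixedPts s π)) := by
  have hsub := fixedPts_subset_cycleMaxima s π
  rw [admissibleLabels, card_filter_powersetCard_subset _ _ _ hsub h, cycleMaxima_sdiff,
    card_sdiff_of_subset hsub]

lemma admissibleLabels_eq_empty (h : ℓ < #(fixedPts s π)) : admissibleLabels s ℓ π = ∅ := by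
  refine filter_eq_empty_iff.2 fun L hL hsub => ?_
  exact ((card_le_card hsub).trans_eq (mem_powersetCard.1 hL).2).not_gt h

lemma sum_choose_card_cycleMaxima (t : Finset X) (j : ℕ) :
    ∑ π ∈ decPerms t with fixedPts t π = ∅, (#(cycleMaxima t π)).choose j =
      ∑ m ∈ Icc j (#t / 2), m.choose j * p2 #t m := by
  have hmaps : ∀ π ∈ {π ∈ decPerms t | fixedPts t π = ∅},
      #(cycleMaxima t π) ∈ range (#t / 2 + 1) := by
    intro π hπ
    obtain ⟨hmem, hfix⟩ := mem_filter.1 hπ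
    have := two_mul_card_cycleMaxima_le (mem_decPerms.1 hmem).2 hfix
    grind
  rw [← sum_fiberwise_of_maps_to hmaps]
  calc _ = ∑ m ∈ range (#t / 2 + 1), m.choose j * p2 #t m := by
        refine sum_congr rfl fun m _ => ?_
        rw [filter_filter, sum_congr rfl (g := fun _ => m.choose j) (by simp +contextual),
          sum_const, card_filter_fixedPts_eq_empty_card_cycleMaxima_eq, smul_eq_mul, mul_comm]
    _ = ∑ m ∈ Icc j (#t / 2), m.choose j * p2 #t m := by
        refine (sum_subset (by grind) fun m _ hm => ?_).symm
        rw [Nat.choose_eq_zero_of_lt (by grind), zero_mul]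

theorem sum_card_admissibleLabels (s : Finset X) (ℓ : ℕ) :
    ∑ π ∈ decPerms s, #(admissibleLabels s ℓ π) =
      ∑ m₁ ∈ range (ℓ + 1), (#s).choose m₁ *
        ∑ m₂ ∈ Icc (ℓ - m₁) ((#s - m₁) / 2), m₂.choose (ℓ - m₁) * p2 (#s - m₁) m₂ := by
  refine .trans ?_ (sum_filter_card_le_powerset s ℓ _)
  have hmaps : ∀ π ∈ {π ∈ decPerms s | #(fixedPts s π) ≤ ℓ},
      fixedPts s π ∈ {A ∈ s.powerset | #A ≤ ℓ} := by
    intro π hπ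
    exact mem_filter.2 ⟨mem_powerset.2 (filter_subset _ _), (mem_filter.1 hπ).2⟩
  rw [← sum_filter_of_ne (p := fun π => #(fixedPts s π) ≤ ℓ), ← sum_fiberwise_of_maps_to hmaps]
  · refine sum_congr rfl fun A hA => ?_
    obtain ⟨hAs, hAℓ⟩ := mem_filter.1 hA
    rw [mem_powerset] at hAs
    rw [← card_sdiff_of_subset hAs, ← sum_choose_card_cycleMaxima, ← filter_fixedPts_eq hAs,
      filter_filter]
    refine sum_congr (by grind) fun π hπ => ?_
    obtain ⟨-, rfl⟩ := mem_filter.1 hπ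
    exact card_admissibleLabels hAℓ
  · intro π _ hne
    by_contra! h
    exact hne (by rw [admissibleLabels_eq_empty h, card_empty])

end AdmissibleLabels

namespace PartialST

variable {α : YoungDiagram} {k k' : ℕ} {L L' : Finset ℕ}

lemma eq_of_label_eq {T T' : PartialST α k} (h : ∀ c ∈ α, T.label c = T'.label c) : T = T' := by
  have hlabel : T.label = T'.label := by
    funext c
    by_cases hc : c ∈ α
    · exact h c hc
    · rw [T.zero_of_not_cell c hc, T'.zero_of_not_cell c hc]
  cases T
  cases T'
  congr

instance : Finite (PartialST α k) :=
  .of_injective (fun T (c : α.cells) => (⟨T.label c, T.mem_of_cell c c.2⟩ : Icc 1 k))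
    fun _ _ h => eq_of_label_eq fun c hc => congrArg Subtype.val (congrFun h ⟨c, hc⟩)

/-- The set of labels of the cells of a partial standard tableau. -/
def labels (T : PartialST α k) : Finset ℕ := α.cells.image T.label

lemma mem_labels {T : PartialST α k} {x : ℕ} : x ∈ T.labels ↔ ∃ c ∈ α, T.label c = x := by
  simp [labels]

lemma label_mem_labels (T : PartialST α k) {c : ℕ × ℕ} (hc : c ∈ α) : T.label c ∈ T.labels :=
  mem_labels.2 ⟨c, hc, rfl⟩

lemma labels_subset (T : PartialST α k) : T.labels ⊆ Icc 1 k :=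
  image_subset_iff.2 T.mem_of_cell

lemma card_labels (T : PartialST α k) : #T.labels = α.card :=
  card_image_of_injOn fun c hc c' hc' => T.injOn c hc c' hc'

lemma labels_eq_Icc (T : PartialST α α.card) : T.labels = Icc 1 α.card :=
  eq_of_subset_of_card_le T.labels_subset (by simp [card_labels])

/-- The tableau obtained from a tableau with set of labels `L` by replacing the labels along an
order isomorphism from `L` to another set of labels. -/
def mapLabels (e : L ≃o L') (hL' : L' ⊆ Icc 1 k') (T : PartialST α k) (hT : T.labels = L) :
    PartialST α k' where
  label c := if hc : c ∈ α then e ⟨T.label c, hT ▸ T.label_mem_labels hc⟩ else 0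
  mem_of_cell c hc := by simpa only [hc, dite_true] using hL' (e _).2
  zero_of_not_cell c hc := by simp [hc]
  injOn c hc c' hc' h := T.injOn c hc c' hc' (by simpa [hc, hc'] using h)
  row_incr i j₁ j₂ hj hc := by
    simpa [hc, α.up_left_mem le_rfl hj.le hc] using T.row_incr i j₁ j₂ hj hc
  col_incr i₁ i₂ j hi hc := by
    simpa [hc, α.up_left_mem hi.le le_rfl hc] using T.col_incr i₁ i₂ j hi hc

lemma label_mapLabels (e : L ≃o L') (hL' : L' ⊆ Icc 1 k') (T : PartialST α k) (hT : T.labels = L)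
    {c : ℕ × ℕ} (hc : c ∈ α) :
    (T.mapLabels e hL' hT).label c = e ⟨T.label c, hT ▸ T.label_mem_labels hc⟩ :=
  dif_pos hc

lemma labels_mapLabels (e : L ≃o L') (hL' : L' ⊆ Icc 1 k') (T : PartialST α k)
    (hT : T.labels = L) : (T.mapLabels e hL' hT).labels = L' := by
  ext y
  rw [mem_labels]
  constructor
  · rintro ⟨c, hc, rfl⟩
    rw [label_mapLabels e hL' T hT hc]
    exact (e _).2
  · intro hy
    have hmem : (e.symm ⟨y, hy⟩ : ℕ) ∈ T.labels := by simp [hT]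
    obtain ⟨c, hc, hlabel⟩ := mem_labels.1 hmem
    exact ⟨c, hc, by simp [label_mapLabels e hL' T hT hc, hlabel]⟩

lemma mapLabels_symm_mapLabels (e : L ≃o L') (hL : L ⊆ Icc 1 k) (hL' : L' ⊆ Icc 1 k')
    (T : PartialST α k) (hT : T.labels = L) :
    (T.mapLabels e hL' hT).mapLabels e.symm hL (labels_mapLabels e hL' T hT) = T :=
  eq_of_label_eq fun c hc => by simp [label_mapLabels, hc]

/-- Relabelling along an order isomorphism is a bijection. -/
def mapLabelsEquiv (e : L ≃o L') (hL : L ⊆ Icc 1 k) (hL' : L' ⊆ Icc 1 k') :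
    {T : PartialST α k // T.labels = L} ≃ {T : PartialST α k' // T.labels = L'} where
  toFun T := ⟨T.1.mapLabels e hL' T.2, labels_mapLabels e hL' T.1 T.2⟩
  invFun T := ⟨T.1.mapLabels e.symm hL T.2, labels_mapLabels e.symm hL T.1 T.2⟩
  left_inv T := Subtype.ext (mapLabels_symm_mapLabels e hL hL' T.1 T.2)
  right_inv T := Subtype.ext (mapLabels_symm_mapLabels e.symm hL' hL T.1 T.2)

lemma card_labels_eq (hL : L ⊆ Icc 1 k) (hcard : #L = α.card) :
    Nat.card {T : PartialST α k // T.labels = L} = fSYT α := by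
  let e : L ≃o Icc 1 α.card :=
    (L.orderIsoOfFin hcard).symm.trans ((Icc 1 α.card).orderIsoOfFin (by simp))
  rw [Nat.card_congr (mapLabelsEquiv e hL subset_rfl), fSYT]
  exact Nat.card_congr (Equiv.subtypeUnivEquiv labels_eq_Icc)

lemma card_labels_mem {𝓛 : Finset (Finset ℕ)} (h𝓛 : 𝓛 ⊆ (Icc 1 k).powersetCard α.card) :
    Nat.card {T : PartialST α k // T.labels ∈ 𝓛} = #𝓛 * fSYT α := by
  have hfiber (L : 𝓛) : Nat.card {T : PartialST α k // T.labels = L} = fSYT α := by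
    obtain ⟨hL, hcard⟩ := mem_powersetCard.1 (h𝓛 L.2)
    exact card_labels_eq hL hcard
  rw [← Nat.card_congr (Equiv.sigmaSubtypeFiberEquivSubtype labels (q := (· ∈ 𝓛)) fun _ => Iff.rfl),
    Nat.card_sigma, sum_congr rfl fun L _ => hfiber L]
  simp

lemma labels_mem_admissibleLabels_iff {T : PartialST α k} {π : Equiv.Perm ℕ} :
    T.labels ∈ admissibleLabels (Icc 1 k) α.card π ↔
      (∀ x ∈ Icc 1 k, π x = x → ∃ c ∈ α, T.label c = x) ∧
        ∀ c ∈ α, ∀ y, SameCycle π (T.label c) y → y ≤ T.label c := by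
  have hfixed : fixedPts (Icc 1 k) π ⊆ T.labels ↔
      ∀ x ∈ Icc 1 k, π x = x → ∃ c ∈ α, T.label c = x := by
    simp only [subset_iff, fixedPts, mem_filter, mem_labels, and_imp]
  have hmaxima : T.labels ⊆ cycleMaxima (Icc 1 k) π ↔
      ∀ c ∈ α, ∀ y, SameCycle π (T.label c) y → y ≤ T.label c :=
    image_subset_iff.trans <| forall₂_congr fun c hc =>
      mem_cycleMaxima.trans (and_iff_right (T.mem_of_cell c hc))
  rw [admissibleLabels, mem_filter, mem_powersetCard, and_iff_left T.card_labels, and_comm,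
    hfixed, hmaxima]

end PartialST

namespace TabPerm

variable {k : ℕ} {α : YoungDiagram}

/-- A pair `(T, π)` consists of a permutation `π` with decreasing cycles and a tableau `T` with an
admissible set of labels. -/
noncomputable def equivSigma (k : ℕ) (α : YoungDiagram) :
    TabPerm k α ≃ Σ π : decPerms (Icc 1 k),
      {T : PartialST α k // T.labels ∈ admissibleLabels (Icc 1 k) α.card π} where
  toFun p := ⟨⟨p.π, mem_decPerms.2 ⟨p.dec, p.perm_of⟩⟩,
    ⟨p.T, PartialST.labels_mem_admissibleLabels_iff.2 ⟨p.fix_mem, p.label_max⟩⟩⟩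
  invFun q :=
    { T := q.2.1
      π := q.1.1
      perm_of := (mem_decPerms.1 q.1.2).2
      dec := (mem_decPerms.1 q.1.2).1
      fix_mem := (PartialST.labels_mem_admissibleLabels_iff.1 q.2.2).1
      label_max := (PartialST.labels_mem_admissibleLabels_iff.1 q.2.2).2 }
  left_inv _ := rfl
  right_inv _ := rfl

lemma card_eq (k : ℕ) (α : YoungDiagram) :
    Nat.card (TabPerm k α) =
      fSYT α * ∑ π ∈ decPerms (Icc 1 k), #(admissibleLabels (Icc 1 k) α.card π) := by
  rw [Nat.card_congr (equivSigma k α), Nat.card_sigma, mul_comm, sum_mul,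
    ← sum_coe_sort (decPerms (Icc 1 k))]
  exact sum_congr rfl fun π _ =>
    PartialST.card_labels_mem admissibleLabels_subset_powersetCard

end TabPerm

/-- The number of pairs `(T, π)` of a partial standard tableau of shape `α ⊢ ℓ` with labels
in `{1, …, k}` and a permutation of `{1, …, k}` with all non-trivial cycles decreasing,
every fixed point of `π` a label of `T` and every label of `T` the greatest element of its
cycle in `π`, equals
`f^{α} ⬝ Σ_{m₁=0}^{ℓ} C(k, m₁) Σ_{m₂=ℓ-m₁}^{⌊(k-m₁)/2⌋} C(m₂, ℓ-m₁) p₂(k-m₁, m₂)`. -/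
theorem statement4 (k ℓ : ℕ) (hk : 1 ≤ k) (α : YoungDiagram) (hα : α.card = ℓ) :
    Nat.card (TabPerm k α) =
      fSYT α *
        ∑ m₁ ∈ Finset.range (ℓ + 1), k.choose m₁ *
          ∑ m₂ ∈ Finset.Icc (ℓ - m₁) ((k - m₁) / 2),
            m₂.choose (ℓ - m₁) * p2 (k - m₁) m₂ := by
  rw [TabPerm.card_eq, hα, sum_card_admissibleLabels, Nat.card_Icc, Nat.add_sub_cancel]

end KroneckerPaper
end

section
/- Let α = (α₁, …, α_r) be a partition of ℓ ≥ 0. For each k ≥ ℓ let n_k be any integer with n_k ≥ k + α₁ and n_k − ℓ ≥ α₁, and let a(k) denote the number of Kronecker tableaux of length k, initial shape (n_k) and final shape (n_k − ℓ, α₁, …, α_r) (this number does not depend on the choice of n_k). Then in the formal power series ring ℚ[[x]] one has Σ_{k ≥ ℓ} a(k) · x^k / k! = (f^{α} / ℓ!) · exp(exp(x) − x − 1) · (exp(x) − 1)^ℓ, where exp denotes the formal exponential series. -/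
open Finset

namespace KroneckerPaper

/-- Substitution `f(g)` of a power series `g` with zero constant term into a power series
`f`: the coefficient of `Xⁿ` in `Σ_m (coeff m f) ⬝ g^m` (the sum is finite in each degree
since `g` has zero constant term, so `coeff n (g^m) = 0` for `m > n`). -/
noncomputable def psSubst {R S : Type*} [CommSemiring R] [CommSemiring S] [Algebra R S]
    (f : PowerSeries R) (g : PowerSeries S) : PowerSeries S :=
  PowerSeries.mk fun n =>
    ∑ m ∈ Finset.range (n + 1),
      algebraMap R S (PowerSeries.coeff m f) * PowerSeries.coeff n (g ^ m)


/-!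
Two partitions of the same size differ by the position of a corner exactly when their truncations
are neighbors: one is obtained from the other by removing, adding or moving a corner. Hence a
Kronecker tableau starting from a long row is a walk from the empty diagram to `α`, each step of
which goes to a neighbor or stays in place and distinguishes a corner.

Young's lattice is modular and every diagram has one more upper cover than lower covers (it is a
`1`-differential poset). Counting the paths `β ⋗ δ ⋖ γ` and `β ⋖ δ ⋗ γ` shows that the density
`φ β = f^β / |β|!` satisfies `∑_{γ ⋖ β} φ γ = |β| φ β` and `∑_{γ ⋗ β} φ γ = φ β`, and that the sum
of `φ` over the diagrams obtained by moving a corner of `β`, plus `φ β` for each corner of `β`, is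
`|β| φ β`. So `K k |β| * φ β` solves the recursion of the walks as soon as
`K (k + 1) l = K k (l + 1) + l K k l + l K k (l - 1)`, and this is the differential equation
`G_l' = G_{l+1} + l G_l + l G_{l-1}` of `G_l = exp(exp(x) - x - 1) (exp(x) - 1)ˡ`, read
coefficientwise.
-/

/-! ### Covering relations in a lattice -/

section Covers

variable {L : Type*}

/-- Two distinct elements of an order are *siblings* if they have a common lower cover. In Young's
lattice this says that one diagram arises from the other by moving a corner. -/
def IsSibling [Preorder L] (a b : L) : Prop :=
  a ≠ b ∧ ∃ d, d ⋖ a ∧ d ⋖ b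

theorem IsSibling.symm [Preorder L] {a b : L} : IsSibling a b → IsSibling b a
  | ⟨hne, d, hda, hdb⟩ => ⟨hne.symm, d, hdb, hda⟩

theorem isSibling_iff_inf_covBy [SemilatticeInf L] {a b : L} :
    IsSibling a b ↔ a ⊓ b ⋖ a ∧ a ⊓ b ⋖ b := by
  constructor
  · rintro ⟨hne, d, hda, hdb⟩
    rw [hda.wcovBy.inf_eq hdb.wcovBy hne]
    exact ⟨hda, hdb⟩
  · rintro ⟨ha, hb⟩
    refine ⟨?_, _, ha, hb⟩
    rintro rfl
    exact ha.ne (inf_idem a)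

theorem isSibling_iff_exists_common_upper_cover [Lattice L] [IsModularLattice L] {a b : L} :
    IsSibling a b ↔ a ≠ b ∧ ∃ d, a ⋖ d ∧ b ⋖ d := by
  constructor
  · intro h
    obtain ⟨ha, hb⟩ := isSibling_iff_inf_covBy.1 h
    exact ⟨h.1, a ⊔ b, hb.sup_of_inf_right, ha.sup_of_inf_left⟩
  · rintro ⟨hne, d, had, hbd⟩
    obtain rfl := had.wcovBy.sup_eq hbd.wcovBy hne
    exact isSibling_iff_inf_covBy.2 ⟨hbd.inf_of_sup_right, had.inf_of_sup_left⟩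

/-- The elements covered by `a`. -/
noncomputable def lowerCovers [Preorder L] [∀ a : L, Finite {b | b ⋖ a}] (a : L) : Finset L :=
  (Set.toFinite {b | b ⋖ a}).toFinset

/-- The elements covering `a`. -/
noncomputable def upperCovers [Preorder L] [∀ a : L, Finite {b | a ⋖ b}] (a : L) : Finset L :=
  (Set.toFinite {b | a ⋖ b}).toFinset

theorem mem_lowerCovers [Preorder L] [∀ a : L, Finite {b | b ⋖ a}] {a b : L} :
    b ∈ lowerCovers a ↔ b ⋖ a := by
  simp [lowerCovers]

theorem mem_upperCovers [Preorder L] [∀ a : L, Finite {b | a ⋖ b}] {a b : L} :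
    b ∈ upperCovers a ↔ a ⋖ b := by
  simp [upperCovers]

/-- The siblings of `a`. -/
noncomputable def siblings [Preorder L] [∀ a : L, Finite {b | b ⋖ a}]
    [∀ a : L, Finite {b | a ⋖ b}] (a : L) : Finset L :=
  open Classical in ((lowerCovers a).biUnion upperCovers).erase a

theorem mem_siblings [Preorder L] [∀ a : L, Finite {b | b ⋖ a}] [∀ a : L, Finite {b | a ⋖ b}]
    {a b : L} : b ∈ siblings a ↔ IsSibling a b := by
  simp only [siblings, mem_erase, mem_biUnion, mem_lowerCovers, mem_upperCovers, IsSibling,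
    ne_comm]

theorem sum_lowerCovers_sum_upperCovers {M : Type*} [AddCommMonoid M] [SemilatticeInf L]
    [∀ a : L, Finite {b | b ⋖ a}] [∀ a : L, Finite {b | a ⋖ b}] (F : L → M) (a : L) :
    ∑ d ∈ lowerCovers a, ∑ b ∈ upperCovers d, F b =
      #(lowerCovers a) • F a + ∑ b ∈ siblings a, F b := by
  classical
  have split (d : L) (hd : d ∈ lowerCovers a) :
      ∑ b ∈ upperCovers d, F b = F a + ∑ b ∈ (upperCovers d).erase a, F b :=
    (add_sum_erase _ _ (mem_upperCovers.2 (mem_lowerCovers.1 hd))).symm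
  have common_lower_cover_unique :
      (lowerCovers a : Set L).PairwiseDisjoint fun d => (upperCovers d).erase a := by
    intro d hd d' hd' hne
    refine disjoint_left.2 fun b hb hb' => hne ?_
    simp only [mem_coe, mem_lowerCovers, mem_erase, mem_upperCovers] at hd hd' hb hb'
    rw [← hd.wcovBy.inf_eq hb.2.wcovBy hb.1.symm, hd'.wcovBy.inf_eq hb'.2.wcovBy hb.1.symm]
  rw [sum_congr rfl split, sum_add_distrib, sum_const, siblings, erase_biUnion,
    sum_biUnion common_lower_cover_unique]

theorem sum_upperCovers_sum_lowerCovers {M : Type*} [AddCommMonoid M] [Lattice L]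
    [IsModularLattice L] [∀ a : L, Finite {b | b ⋖ a}] [∀ a : L, Finite {b | a ⋖ b}]
    (F : L → M) (a : L) :
    ∑ d ∈ upperCovers a, ∑ b ∈ lowerCovers d, F b =
      #(upperCovers a) • F a + ∑ b ∈ siblings a, F b := by
  classical
  have split (d : L) (hd : d ∈ upperCovers a) :
      ∑ b ∈ lowerCovers d, F b = F a + ∑ b ∈ (lowerCovers d).erase a, F b :=
    (add_sum_erase _ _ (mem_lowerCovers.2 (mem_upperCovers.1 hd))).symm
  have common_upper_cover_unique :
      (upperCovers a : Set L).PairwiseDisjoint fun d => (lowerCovers d).erase a := by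
    intro d hd d' hd' hne
    refine disjoint_left.2 fun b hb hb' => hne ?_
    simp only [mem_coe, mem_lowerCovers, mem_erase, mem_upperCovers] at hd hd' hb hb'
    rw [← hd.wcovBy.sup_eq hb.2.wcovBy hb.1.symm, hd'.wcovBy.sup_eq hb'.2.wcovBy hb.1.symm]
  have siblings_eq : siblings a = (upperCovers a).biUnion fun d => (lowerCovers d).erase a := by
    ext b
    simp only [mem_siblings, isSibling_iff_exists_common_upper_cover, mem_biUnion, mem_erase,
      mem_lowerCovers, mem_upperCovers, ne_comm]
    tauto
  rw [sum_congr rfl split, sum_add_distrib, sum_const, siblings_eq,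
    sum_biUnion common_upper_cover_unique]

end Covers

/-! ### Young's lattice -/

section YoungLattice

variable {β γ : YoungDiagram} {c d : ℕ × ℕ} {i j : ℕ}

theorem eq_of_le_of_card_le (h : γ ≤ β) (hcard : β.card ≤ γ.card) : γ = β :=
  YoungDiagram.ext (eq_of_subset_of_card_le (YoungDiagram.cells_subset_iff.2 h) hcard)

theorem card_mono : Monotone YoungDiagram.card :=
  fun _ _ h => card_le_card (YoungDiagram.cells_subset_iff.2 h)

theorem rowLen_mono (h : γ ≤ β) (i : ℕ) : γ.rowLen i ≤ β.rowLen i := by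
  by_contra! hlt
  have hmem : (i, β.rowLen i) ∈ β := h (YoungDiagram.mem_iff_lt_rowLen.2 hlt)
  exact (YoungDiagram.mem_iff_lt_rowLen.1 hmem).false

theorem mem_of_le_of_mem (hdc : d ≤ c) (hc : c ∈ β) : d ∈ β :=
  β.isLowerSet hdc hc

theorem isCorner_iff_forall_lt : IsCorner β c ↔ c ∈ β ∧ ∀ d, c < d → d ∉ β := by
  obtain ⟨i, j⟩ := c
  refine and_congr_right fun _ => ⟨fun ⟨hdown, hright⟩ ⟨i', j'⟩ hlt hmem => ?_, fun h => ?_⟩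
  · rcases Prod.mk_lt_mk.1 hlt with ⟨hi, hj⟩ | ⟨hi, hj⟩
    · exact hdown (mem_of_le_of_mem (Prod.mk_le_mk.2 ⟨hi, hj⟩) hmem)
    · exact hright (mem_of_le_of_mem (Prod.mk_le_mk.2 ⟨hi, hj⟩) hmem)
  · exact ⟨h _ (Prod.mk_lt_mk.2 (.inl ⟨i.lt_succ_self, le_rfl⟩)),
      h _ (Prod.mk_lt_mk.2 (.inr ⟨le_rfl, j.lt_succ_self⟩))⟩

theorem isCorner_mk_iff_rowLen :
    IsCorner β (i, j) ↔ β.rowLen (i + 1) < β.rowLen i ∧ β.rowLen i = j + 1 := by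
  have := β.rowLen_anti i (i + 1) i.le_succ
  simp only [IsCorner, YoungDiagram.mem_iff_lt_rowLen]
  omega

theorem exists_isCorner_notMem (h : γ < β) : ∃ c, IsCorner β c ∧ c ∉ γ := by
  obtain ⟨d, hd⟩ := sdiff_nonempty.2 (YoungDiagram.cells_ssubset_iff.2 h).not_subset
  obtain ⟨c, hc, hmax⟩ := exists_maximal ⟨d, hd⟩
  simp only [mem_sdiff, YoungDiagram.mem_cells] at hc hmax
  refine ⟨c, isCorner_iff_forall_lt.2 ⟨hc.1, fun e hce heβ => ?_⟩, hc.2⟩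
  exact hce.not_ge (hmax ⟨heβ, fun heγ => hc.2 (mem_of_le_of_mem hce.le heγ)⟩ hce.le)

/-- The diagram `β` without its corner `c`. -/
def removeCorner (h : IsCorner β c) : YoungDiagram where
  cells := β.cells.erase c
  isLowerSet := by
    rw [coe_erase]
    refine β.isLowerSet.erase fun d hd hcd => ?_
    by_contra hne
    exact (isCorner_iff_forall_lt.1 h).2 d (lt_of_le_of_ne hcd (Ne.symm hne)) hd

theorem mem_removeCorner (h : IsCorner β c) : d ∈ removeCorner h ↔ d ≠ c ∧ d ∈ β :=
  mem_erase

theorem card_removeCorner_add_one (h : IsCorner β c) : (removeCorner h).card + 1 = β.card :=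
  card_erase_add_one (YoungDiagram.mem_cells c |>.2 h.1)

theorem covBy_of_le_of_card_eq (h : γ ≤ β) (hcard : β.card = γ.card + 1) : γ ⋖ β := by
  refine ⟨lt_of_le_of_ne h fun heq => ?_, fun δ hγδ hδβ => ?_⟩
  · rw [heq] at hcard
    omega
  · have h₁ : ¬ δ.card ≤ γ.card := fun hle => hγδ.ne (eq_of_le_of_card_le hγδ.le hle)
    have h₂ : ¬ β.card ≤ δ.card := fun hle => hδβ.ne (eq_of_le_of_card_le hδβ.le hle)
    omega

theorem removeCorner_covBy (h : IsCorner β c) : removeCorner h ⋖ β :=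
  covBy_of_le_of_card_eq (fun _ hd => ((mem_removeCorner h).1 hd).2)
    (card_removeCorner_add_one h).symm

theorem exists_eq_removeCorner (h : γ ⋖ β) : ∃ (c : ℕ × ℕ) (hc : IsCorner β c),
    γ = removeCorner hc := by
  obtain ⟨c, hc, hcγ⟩ := exists_isCorner_notMem h.lt
  have hle : γ ≤ removeCorner hc := fun d hd =>
    (mem_removeCorner hc).2 ⟨fun hdc => hcγ (hdc ▸ hd), h.le hd⟩
  exact ⟨c, hc, ((h.eq_or_eq hle (removeCorner_covBy hc).le).resolve_right
    (removeCorner_covBy hc).ne).symm⟩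

theorem covBy_iff_card : γ ⋖ β ↔ γ ≤ β ∧ β.card = γ.card + 1 := by
  refine ⟨fun h => ⟨h.le, ?_⟩, fun h => covBy_of_le_of_card_eq h.1 h.2⟩
  obtain ⟨c, hc, rfl⟩ := exists_eq_removeCorner h
  exact (card_removeCorner_add_one hc).symm

variable (β) in
/-- The bijection between the corners of a diagram and the diagrams it covers. -/
noncomputable def cornerEquivLowerCover : {c // IsCorner β c} ≃ {γ // γ ⋖ β} :=
  Equiv.ofBijective (fun c => ⟨removeCorner c.2, removeCorner_covBy c.2⟩) <| by
    refine ⟨fun ⟨c, hc⟩ ⟨d, hd⟩ h => Subtype.ext ?_, fun ⟨γ, hγ⟩ => ?_⟩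
    · have heq : removeCorner hc = removeCorner hd := congrArg Subtype.val h
      by_contra hne
      have hmem : c ∈ removeCorner hc := heq ▸ (mem_removeCorner hd).2 ⟨hne, hc.1⟩
      exact ((mem_removeCorner hc).1 hmem).1 rfl
    · obtain ⟨c, hc, rfl⟩ := exists_eq_removeCorner hγ
      exact ⟨⟨c, hc⟩, rfl⟩

instance : Finite {c // IsCorner β c} :=
  (β.cells.finite_toSet.subset fun c hc => (YoungDiagram.mem_cells c).2 hc.1).to_subtype

instance (β : YoungDiagram) : Finite {γ | γ ⋖ β} :=
  .of_equiv _ (cornerEquivLowerCover β)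

theorem card_lowerCovers : #(lowerCovers β) = Nat.card {c // IsCorner β c} := by
  rw [Nat.card_congr (cornerEquivLowerCover β), lowerCovers,
    ← Set.ncard_eq_toFinset_card _ _]
  rfl

/-- A cell is *addable* to `β` if it can be added to `β` to form a larger Young diagram. -/
def IsAddable (β : YoungDiagram) (c : ℕ × ℕ) : Prop :=
  c ∉ β ∧ ∀ d < c, d ∈ β

theorem isAddable_mk_iff_rowLen :
    IsAddable β (i, j) ↔ j = β.rowLen i ∧ ∀ i' < i, β.rowLen i < β.rowLen i' := by
  simp only [IsAddable, Prod.forall, Prod.mk_lt_mk, YoungDiagram.mem_iff_lt_rowLen, not_lt]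
  constructor
  · rintro ⟨hle, hlt⟩
    have hj : j = β.rowLen i := by
      refine le_antisymm ?_ hle
      by_contra! h
      exact (hlt i (β.rowLen i) (.inr ⟨le_rfl, h⟩)).false
    exact ⟨hj, fun i' hi' => hj ▸ hlt i' j (.inl ⟨hi', le_rfl⟩)⟩
  · rintro ⟨rfl, hlt⟩
    refine ⟨le_rfl, fun i' j' h => ?_⟩
    rcases h with ⟨hi, hj⟩ | ⟨hi, hj⟩
    · exact hj.trans_lt (hlt i' hi)
    · exact hj.trans_le (β.rowLen_anti i' i hi)

theorem exists_isAddable_mem (h : β < γ) : ∃ c, IsAddable β c ∧ c ∈ γ := by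
  obtain ⟨d, hd⟩ := sdiff_nonempty.2 (YoungDiagram.cells_ssubset_iff.2 h).not_subset
  obtain ⟨c, hc, hmin⟩ := exists_minimal ⟨d, hd⟩
  simp only [mem_sdiff, YoungDiagram.mem_cells] at hc hmin
  refine ⟨c, ⟨hc.2, fun e hec => ?_⟩, hc.1⟩
  by_contra heβ
  exact hec.not_ge (hmin ⟨mem_of_le_of_mem hec.le hc.1, heβ⟩ hec.le)

/-- The diagram `β` with the addable cell `c` added. -/
def addCell (h : IsAddable β c) : YoungDiagram where
  cells := insert c β.cells
  isLowerSet := by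
    intro d e hed hd
    simp only [coe_insert, Set.mem_insert_iff, mem_coe, YoungDiagram.mem_cells] at hd ⊢
    rcases hd with rfl | hd
    · exact hed.eq_or_lt.imp_right (h.2 e)
    · exact .inr (mem_of_le_of_mem hed hd)

theorem mem_addCell (h : IsAddable β c) : d ∈ addCell h ↔ d = c ∨ d ∈ β := by
  rw [← YoungDiagram.mem_cells, ← YoungDiagram.mem_cells]
  exact mem_insert

theorem covBy_addCell (h : IsAddable β c) : β ⋖ addCell h :=
  covBy_of_le_of_card_eq (fun _ hd => (mem_addCell h).2 (.inr hd))
    (card_insert_of_notMem fun hc => h.1 (YoungDiagram.mem_cells c |>.1 hc))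

variable (β) in
/-- The bijection between the addable cells of a diagram and the diagrams covering it. -/
noncomputable def addableEquivUpperCover : {c // IsAddable β c} ≃ {γ // β ⋖ γ} :=
  Equiv.ofBijective (fun c => ⟨addCell c.2, covBy_addCell c.2⟩) <| by
    refine ⟨fun ⟨c, hc⟩ ⟨d, hd⟩ h => Subtype.ext ?_, fun ⟨γ, hγ⟩ => ?_⟩
    · have heq : addCell hc = addCell hd := congrArg Subtype.val h
      have hmem : c ∈ addCell hd := heq ▸ (mem_addCell hc).2 (.inl rfl)
      exact ((mem_addCell hd).1 hmem).resolve_right hc.1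
    · obtain ⟨c, hc, hcγ⟩ := exists_isAddable_mem hγ.lt
      have hle : addCell hc ≤ γ := fun d hd =>
        ((mem_addCell hc).1 hd).elim (fun hdc => hdc ▸ hcγ) fun hdβ => hγ.le hdβ
      exact ⟨⟨c, hc⟩, Subtype.ext
        ((hγ.eq_or_eq (covBy_addCell hc).le hle).resolve_left (covBy_addCell hc).ne')⟩

theorem isAddable_of_isCorner (h : IsCorner β (i, j)) :
    IsAddable β (i + 1, β.rowLen (i + 1)) :=
  isAddable_mk_iff_rowLen.2 ⟨rfl, fun i' hi' =>
    (isCorner_mk_iff_rowLen.1 h).1.trans_le (β.rowLen_anti i' i (Nat.lt_succ_iff.1 hi'))⟩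

variable (β) in
/-- The end of the first row is addable; every other addable cell lies on the row below a corner. -/
noncomputable def optionCornerEquivAddable : Option {c // IsCorner β c} ≃ {c // IsAddable β c} :=
  Equiv.ofBijective
    (fun o => o.elim ⟨(0, β.rowLen 0), isAddable_mk_iff_rowLen.2 ⟨rfl, by simp⟩⟩
      fun c => ⟨(c.1.1 + 1, β.rowLen (c.1.1 + 1)), isAddable_of_isCorner c.2⟩) <| by
    constructor
    · rintro (_ | ⟨⟨i, j⟩, hc⟩) (_ | ⟨⟨i', j'⟩, hc'⟩) h
      · rfl
      · simp at h
      · simp at h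
      · simp only [Option.elim_some, Subtype.mk.injEq, Prod.mk.injEq, add_left_inj] at h
        obtain ⟨rfl, -⟩ := h
        have := (isCorner_mk_iff_rowLen.1 hc).2
        have := (isCorner_mk_iff_rowLen.1 hc').2
        obtain rfl : j = j' := by omega
        rfl
    · rintro ⟨⟨_ | i, j⟩, hc⟩ <;> obtain ⟨rfl, hlt⟩ := isAddable_mk_iff_rowLen.1 hc
      · exact ⟨none, rfl⟩
      · have hi := hlt i i.lt_succ_self
        exact ⟨some ⟨(i, β.rowLen i - 1), isCorner_mk_iff_rowLen.2 ⟨hi, by omega⟩⟩, rfl⟩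

instance (β : YoungDiagram) : Finite {γ | β ⋖ γ} :=
  .of_equiv _ ((optionCornerEquivAddable β).trans (addableEquivUpperCover β))

theorem card_upperCovers : #(upperCovers β) = #(lowerCovers β) + 1 := by
  rw [card_lowerCovers, ← Finite.card_option,
    Nat.card_congr ((optionCornerEquivAddable β).trans (addableEquivUpperCover β)), upperCovers,
    ← Set.ncard_eq_toFinset_card _ _]
  rfl

theorem isSibling_iff_card :
    IsSibling β γ ↔ β.card = γ.card ∧ (β ⊓ γ).card + 1 = β.card := by
  simp only [isSibling_iff_inf_covBy, covBy_iff_card, inf_le_left, inf_le_right, true_and]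
  omega

theorem moveCorner_iff_isSibling : MoveCorner β γ ↔ IsSibling β γ := by
  constructor
  · rintro ⟨hne, c, c', hc, -, hc', hγ⟩
    refine ⟨hne.symm, removeCorner hc, removeCorner_covBy hc, covBy_of_le_of_card_eq ?_ ?_⟩
    · exact YoungDiagram.cells_subset_iff.1 (hγ ▸ subset_insert c' _)
    · exact (congrArg card hγ).trans (card_insert_of_notMem hc')
  · rintro ⟨hne, δ, hδβ, hδγ⟩
    obtain ⟨c, hc, rfl⟩ := exists_eq_removeCorner hδβ
    obtain ⟨c', hc', heq⟩ := exists_eq_removeCorner hδγ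
    have hcells : β.cells.erase c = γ.cells.erase c' := congrArg YoungDiagram.cells heq
    refine ⟨hne.symm, c, c', hc, hc', ?_, ?_⟩ <;> rw [hcells]
    · exact notMem_erase c' _
    · exact (insert_erase ((YoungDiagram.mem_cells c').2 hc'.1)).symm

theorem rowLen_le_of_covBy (h : γ ⋖ β) (i : ℕ) : β.rowLen i ≤ γ.rowLen i + 1 := by
  obtain ⟨c, hc, rfl⟩ := exists_eq_removeCorner h
  set r := (removeCorner hc).rowLen i
  have eq_corner (j : ℕ) (hrj : r ≤ j) (hj : (i, j) ∈ β) : (i, j) = c := by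
    by_contra hne
    have := YoungDiagram.mem_iff_lt_rowLen.1 ((mem_removeCorner hc).2 ⟨hne, hj⟩)
    omega
  by_contra! hlt
  have h₁ := eq_corner r le_rfl (YoungDiagram.mem_iff_lt_rowLen.2 (by omega))
  have h₂ := eq_corner (r + 1) r.le_succ (YoungDiagram.mem_iff_lt_rowLen.2 hlt)
  simp [← h₂] at h₁

/-- The neighbors of `β` are the diagrams obtained from it by removing, adding or moving a
corner. -/
noncomputable def neighbors (β : YoungDiagram) : Finset YoungDiagram :=
  open Classical in lowerCovers β ∪ upperCovers β ∪ siblings β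

theorem mem_neighbors : γ ∈ neighbors β ↔ γ ⋖ β ∨ β ⋖ γ ∨ IsSibling β γ := by
  simp only [neighbors, mem_union, mem_lowerCovers, mem_upperCovers, mem_siblings, or_assoc]

theorem sum_neighbors {M : Type*} [AddCommMonoid M] (F : YoungDiagram → M) (β : YoungDiagram) :
    ∑ γ ∈ neighbors β, F γ =
      ∑ γ ∈ lowerCovers β, F γ + ∑ γ ∈ upperCovers β, F γ + ∑ γ ∈ siblings β, F γ := by
  classical
  rw [neighbors, sum_union, sum_union]
  · refine disjoint_left.2 fun γ hlower hupper => ?_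
    exact (mem_lowerCovers.1 hlower).lt.asymm (mem_upperCovers.1 hupper).lt
  · refine disjoint_left.2 fun γ hcover hsibling => ?_
    simp only [mem_union, mem_lowerCovers, mem_upperCovers, mem_siblings, covBy_iff_card,
      isSibling_iff_card] at hcover hsibling
    omega

theorem rowLen_le_of_mem_neighbors (h : γ ∈ neighbors β) (i : ℕ) :
    γ.rowLen i ≤ β.rowLen i + 1 := by
  rcases mem_neighbors.1 h with h | h | h
  · exact (rowLen_mono h.le i).trans (Nat.le_succ _)
  · exact rowLen_le_of_covBy h i
  · obtain ⟨-, δ, hδβ, hδγ⟩ := h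
    exact (rowLen_le_of_covBy hδγ i).trans (Nat.succ_le_succ (rowLen_mono hδβ.le i))

end YoungLattice

/-! ### Standard tableaux -/

section StandardTableaux

variable {β : YoungDiagram} {c d : ℕ × ℕ} {k m : ℕ}

theorem PartialST.ext {S T : PartialST β k} (h : ∀ c, S.label c = T.label c) : S = T := by
  obtain ⟨S, _, _, _, _, _⟩ := S
  obtain ⟨T, _, _, _, _, _⟩ := T
  obtain rfl : S = T := funext h
  rfl

theorem PartialST.label_le (T : PartialST β k) (c : ℕ × ℕ) : T.label c ≤ k := by
  by_cases hc : c ∈ β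
  · exact (mem_Icc.1 (T.mem_of_cell c hc)).2
  · rw [T.zero_of_not_cell c hc]
    exact k.zero_le

theorem PartialST.label_lt (T : PartialST β k) (hcd : c < d) (hd : d ∈ β) :
    T.label c < T.label d := by
  obtain ⟨i, j⟩ := c
  obtain ⟨i', j'⟩ := d
  have row_le (h : j ≤ j') : T.label (i', j) ≤ T.label (i', j') := by
    rcases h.eq_or_lt with rfl | h
    · rfl
    · exact (T.row_incr i' j j' h hd).le
  rcases Prod.mk_lt_mk.1 hcd with ⟨hi, hj⟩ | ⟨hi, hj⟩
  · exact (T.col_incr i i' j hi (β.up_left_mem le_rfl hj hd)).trans_le (row_le hj)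
  · rcases hi.eq_or_lt with rfl | hi
    · exact T.row_incr i j j' hj hd
    · exact (T.col_incr i i' j hi (β.up_left_mem le_rfl hj.le hd)).trans_le (row_le hj.le)

/-- The partial standard tableau with a given labelling that increases strictly along the product
order of the cells. -/
def PartialST.ofLabelLT (label : ℕ × ℕ → ℕ) (mem : ∀ c ∈ β, label c ∈ Icc 1 k)
    (zero : ∀ c, c ∉ β → label c = 0) (inj : ∀ c ∈ β, ∀ d ∈ β, label c = label d → c = d)
    (lt : ∀ c d, c < d → d ∈ β → label c < label d) : PartialST β k where
  label := label
  mem_of_cell := mem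
  zero_of_not_cell := zero
  injOn := inj
  row_incr _ _ _ hj := lt _ _ (Prod.mk_lt_mk.2 (.inr ⟨le_rfl, hj⟩))
  col_incr _ _ _ hi := lt _ _ (Prod.mk_lt_mk.2 (.inl ⟨hi, le_rfl⟩))

instance : Finite (PartialST β k) := by
  refine .of_injective (β := β.cells → Fin (k + 1))
    (fun T c => ⟨T.label c, Nat.lt_succ_of_le (T.label_le c)⟩) fun S T h => ?_
  refine PartialST.ext fun c => ?_
  by_cases hc : c ∈ β
  · exact congrArg Fin.val (congrFun h ⟨c, (YoungDiagram.mem_cells c).2 hc⟩)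
  · rw [S.zero_of_not_cell c hc, T.zero_of_not_cell c hc]

/-- Fill the removed corner with the new largest label. -/
def PartialST.extend (h : IsCorner β c) (T : PartialST (removeCorner h) m) :
    PartialST β (m + 1) :=
  .ofLabelLT (Function.update T.label c (m + 1))
    (fun d hd => by
      rcases eq_or_ne d c with rfl | hdc
      · simp
      · have := mem_Icc.1 (T.mem_of_cell d ((mem_removeCorner h).2 ⟨hdc, hd⟩))
        rw [Function.update_of_ne hdc, mem_Icc]
        omega)
    (fun d hd => by
      rw [Function.update_of_ne (ne_of_mem_of_not_mem h.1 hd).symm]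
      exact T.zero_of_not_cell d fun hd' => hd ((mem_removeCorner h).1 hd').2)
    (fun d hd e he heq => by
      have hle_d := T.label_le d
      have hle_e := T.label_le e
      obtain hdc | hdc := eq_or_ne d c <;> obtain hec | hec := eq_or_ne e c
      · exact hdc.trans hec.symm
      · rw [hdc, Function.update_self, Function.update_of_ne hec] at heq
        omega
      · rw [hec, Function.update_self, Function.update_of_ne hdc] at heq
        omega
      · rw [Function.update_of_ne hdc, Function.update_of_ne hec] at heq
        exact T.injOn d ((mem_removeCorner h).2 ⟨hdc, hd⟩) e
          ((mem_removeCorner h).2 ⟨hec, he⟩) heq)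
    (fun d e hde he => by
      have hdc : d ≠ c := by
        rintro rfl
        exact (isCorner_iff_forall_lt.1 h).2 e hde he
      rw [Function.update_of_ne hdc]
      rcases eq_or_ne e c with rfl | hec
      · rw [Function.update_self]
        exact Nat.lt_succ_of_le (T.label_le d)
      · rw [Function.update_of_ne hec]
        exact T.label_lt hde ((mem_removeCorner h).2 ⟨hec, he⟩))

theorem PartialST.label_extend (h : IsCorner β c) (T : PartialST (removeCorner h) m) :
    (T.extend h).label = Function.update T.label c (m + 1) :=
  rfl

theorem PartialST.label_extend_eq_iff (h : IsCorner β c) (T : PartialST (removeCorner h) m) :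
    (T.extend h).label d = m + 1 ↔ d = c := by
  have := T.label_le d
  rw [T.label_extend h]
  rcases eq_or_ne d c with rfl | hdc
  · simp
  · simp only [Function.update_of_ne hdc, hdc, iff_false]
    omega

/-- Forget the largest label. -/
def PartialST.restrict (h : IsCorner β c) (T : PartialST β (m + 1)) (hc : T.label c = m + 1) :
    PartialST (removeCorner h) m :=
  .ofLabelLT (Function.update T.label c 0)
    (fun d hd => by
      obtain ⟨hdc, hd⟩ := (mem_removeCorner h).1 hd
      have hmem := mem_Icc.1 (T.mem_of_cell d hd)
      have hne : T.label d ≠ m + 1 := fun hd' => hdc (T.injOn d hd c h.1 (hd'.trans hc.symm))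
      rw [Function.update_of_ne hdc, mem_Icc]
      omega)
    (fun d hd => by
      rcases eq_or_ne d c with rfl | hdc
      · exact Function.update_self ..
      · rw [Function.update_of_ne hdc]
        exact T.zero_of_not_cell d fun hd' => hd ((mem_removeCorner h).2 ⟨hdc, hd'⟩))
    (fun d hd e he heq => by
      obtain ⟨hdc, hd⟩ := (mem_removeCorner h).1 hd
      obtain ⟨hec, he⟩ := (mem_removeCorner h).1 he
      rw [Function.update_of_ne hdc, Function.update_of_ne hec] at heq
      exact T.injOn d hd e he heq)
    (fun d e hde he => by
      obtain ⟨hec, he⟩ := (mem_removeCorner h).1 he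
      rw [Function.update_of_ne hec]
      refine lt_of_le_of_lt ?_ (T.label_lt hde he)
      rcases eq_or_ne d c with rfl | hdc
      · rw [Function.update_self]
        exact Nat.zero_le _
      · rw [Function.update_of_ne hdc])

theorem PartialST.extend_restrict (h : IsCorner β c) (T : PartialST β (m + 1))
    (hc : T.label c = m + 1) : (T.restrict h hc).extend h = T := by
  refine PartialST.ext fun d => ?_
  change Function.update (Function.update T.label c 0) c (m + 1) d = T.label d
  simpa only [Function.update_idem, hc] using congrFun (Function.update_eq_self c T.label) d

theorem PartialST.isCorner_of_label_eq (T : PartialST β k) (hc : c ∈ β) (hck : T.label c = k) :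
    IsCorner β c := by
  refine isCorner_iff_forall_lt.2 ⟨hc, fun d hcd hd => ?_⟩
  exact (T.label_le d).not_gt (hck.symm.trans_lt (T.label_lt hcd hd))

theorem PartialST.exists_label_eq (T : PartialST β k) (hk : k ≤ β.card) {x : ℕ}
    (hx : x ∈ Icc 1 k) : ∃ c ∈ β, T.label c = x := by
  obtain ⟨c, hc, rfl⟩ := surj_on_of_inj_on_of_card_le (s := β.cells) (fun c _ => T.label c)
    (fun c hc => T.mem_of_cell c ((YoungDiagram.mem_cells c).1 hc))
    (fun c d hc hd => T.injOn c ((YoungDiagram.mem_cells c).1 hc) d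
      ((YoungDiagram.mem_cells d).1 hd)) (by simpa using hk) x hx
  exact ⟨c, (YoungDiagram.mem_cells c).1 hc, rfl⟩

theorem PartialST.bijective_extend (hβ : β.card = m + 1) :
    Function.Bijective fun T : Σ c : {c // IsCorner β c}, PartialST (removeCorner c.2) m =>
      T.2.extend T.1.2 := by
  constructor
  · rintro ⟨⟨c, hc⟩, S⟩ ⟨⟨d, hd⟩, T⟩ h
    replace h : S.extend hc = T.extend hd := h
    obtain rfl : c = d := (T.label_extend_eq_iff hd).1 (h ▸ (S.label_extend_eq_iff hc).2 rfl)
    suffices S = T by rw [this]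
    refine PartialST.ext fun e => ?_
    rcases eq_or_ne e c with rfl | hec
    · have he : e ∉ removeCorner hc := fun he => ((mem_removeCorner hc).1 he).1 rfl
      rw [S.zero_of_not_cell e he, T.zero_of_not_cell e he]
    · have := congrArg (PartialST.label · e) h
      simpa only [PartialST.label_extend, Function.update_of_ne hec] using this
  · intro T
    obtain ⟨c, hc, hcm⟩ := T.exists_label_eq hβ.ge (by simp : m + 1 ∈ Icc 1 (m + 1))
    have hcorner := T.isCorner_of_label_eq hc hcm
    exact ⟨⟨⟨c, hcorner⟩, T.restrict hcorner hcm⟩, T.extend_restrict hcorner hcm⟩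

theorem fSYT_bot : fSYT ⊥ = 1 := by
  refine Nat.card_eq_one_iff_unique.2 ⟨⟨fun S T => PartialST.ext fun c => ?_⟩, ⟨?_⟩⟩
  · rw [S.zero_of_not_cell c (YoungDiagram.notMem_bot c),
      T.zero_of_not_cell c (YoungDiagram.notMem_bot c)]
  · exact .ofLabelLT (fun _ => 0) (by simp) (by simp) (by simp) (by simp)

theorem fSYT_eq_sum_lowerCovers (hβ : β.card ≠ 0) : fSYT β = ∑ γ ∈ lowerCovers β, fSYT γ := by
  obtain ⟨m, hm⟩ := Nat.exists_eq_succ_of_ne_zero hβ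
  have card_of_covBy {γ : YoungDiagram} (h : γ ⋖ β) : γ.card = m := by
    have := (covBy_iff_card.1 h).2
    omega
  have := Fintype.ofFinite {c // IsCorner β c}
  rw [fSYT, hm, ← Nat.card_congr (.ofBijective _ (PartialST.bijective_extend hm)), Nat.card_sigma]
  refine sum_bij (fun c _ => removeCorner c.2)
    (fun c _ => mem_lowerCovers.2 (removeCorner_covBy c.2))
    (fun c _ d _ h => (cornerEquivLowerCover β).injective (Subtype.ext h))
    (fun γ hγ => ?_) fun c _ => ?_
  · obtain ⟨c, hc, rfl⟩ := exists_eq_removeCorner (mem_lowerCovers.1 hγ)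
    exact ⟨⟨c, hc⟩, mem_univ _, rfl⟩
  · rw [fSYT, card_of_covBy (removeCorner_covBy c.2)]

/-- The proportion `f^β / |β|!` of the bijective labellings of `β` that are standard tableaux. -/
noncomputable def sytDensity (β : YoungDiagram) : ℚ :=
  fSYT β / β.card.factorial

theorem sytDensity_bot : sytDensity ⊥ = 1 := by
  simp [sytDensity, fSYT_bot, YoungDiagram.card]

theorem sum_lowerCovers_sytDensity (β : YoungDiagram) :
    ∑ γ ∈ lowerCovers β, sytDensity γ = β.card * sytDensity β := by
  have card_of_mem {γ : YoungDiagram} (h : γ ∈ lowerCovers β) : β.card = γ.card + 1 :=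
    (covBy_iff_card.1 (mem_lowerCovers.1 h)).2
  rcases Nat.eq_zero_or_eq_succ_pred β.card with hβ | hβ
  · rw [hβ, Nat.cast_zero, zero_mul]
    exact sum_eq_zero fun γ hγ => by have := card_of_mem hγ; omega
  · set m := β.card.pred
    have density_eq (γ) (hγ : γ ∈ lowerCovers β) : sytDensity γ = (fSYT γ : ℚ) / m.factorial := by
      have hγm : γ.card = m := by have := card_of_mem hγ; omega
      rw [sytDensity, hγm]
    rw [sum_congr rfl density_eq, ← sum_div, ← Nat.cast_sum,
      ← fSYT_eq_sum_lowerCovers (by omega), sytDensity, hβ, Nat.factorial_succ]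
    push_cast
    field_simp

theorem sum_upperCovers_sytDensity (β : YoungDiagram) :
    ∑ γ ∈ upperCovers β, sytDensity γ = sytDensity β := by
  induction hn : β.card using Nat.strong_induction_on generalizing β with
  | _ n ih =>
    have up_down : (β.card + 1) * ∑ γ ∈ upperCovers β, sytDensity γ =
        ∑ δ ∈ upperCovers β, ∑ γ ∈ lowerCovers δ, sytDensity γ := by
      rw [mul_sum]
      refine sum_congr rfl fun δ hδ => ?_
      rw [sum_lowerCovers_sytDensity, (covBy_iff_card.1 (mem_upperCovers.1 hδ)).2]
      push_cast
      rfl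
    have down_up : ∑ δ ∈ lowerCovers β, ∑ γ ∈ upperCovers δ, sytDensity γ =
        β.card * sytDensity β := by
      rw [← sum_lowerCovers_sytDensity]
      refine sum_congr rfl fun δ hδ => ih δ.card ?_ δ rfl
      have := (covBy_iff_card.1 (mem_lowerCovers.1 hδ)).2
      omega
    rw [sum_upperCovers_sum_lowerCovers, card_upperCovers] at up_down
    rw [sum_lowerCovers_sum_upperCovers] at down_up
    simp only [nsmul_eq_mul, Nat.cast_add, Nat.cast_one] at up_down down_up
    have hpos : (β.card + 1 : ℚ) ≠ 0 := by positivity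
    exact mul_left_cancel₀ hpos (by linarith)

theorem sum_siblings_sytDensity (β : YoungDiagram) :
    #(lowerCovers β) * sytDensity β + ∑ γ ∈ siblings β, sytDensity γ =
      β.card * sytDensity β := by
  rw [← sum_lowerCovers_sytDensity, ← nsmul_eq_mul, ← sum_lowerCovers_sum_upperCovers]
  exact sum_congr rfl fun δ _ => sum_upperCovers_sytDensity δ

end StandardTableaux

/-! ### The generating series -/

section GeneratingSeries

open PowerSeries

theorem psSubst_eq_subst {R S : Type*} [CommRing R] [CommRing S] [Algebra R S] (f : R⟦X⟧)
    {g : S⟦X⟧} (hg : constantCoeff g = 0) : psSubst f g = f.subst g := by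
  ext n
  have coeff_pow_eq_zero {m : ℕ} (h : n < m) : coeff n (g ^ m) = 0 :=
    X_pow_dvd_iff.1 (pow_dvd_pow_of_dvd (X_dvd_iff.2 hg) m) n h
  rw [psSubst, coeff_mk, coeff_subst' (HasSubst.of_constantCoeff_zero' hg),
    finsum_eq_sum_of_support_subset (s := range (n + 1))]
  · simp only [Algebra.smul_def]
  · intro m hm
    rw [coe_range, Set.mem_Iio, Nat.lt_succ_iff]
    by_contra! h
    exact hm (by simp only [coeff_pow_eq_zero h, smul_zero])

/-- The series `exp(exp(x) - x - 1) (exp(x) - 1)ˡ`. -/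
noncomputable def kroneckerSeries (l : ℕ) : ℚ⟦X⟧ :=
  psSubst (exp ℚ) (exp ℚ - X - 1) * (exp ℚ - 1) ^ l

theorem derivative_kroneckerSeries (l : ℕ) :
    derivative ℚ (kroneckerSeries l) =
      kroneckerSeries (l + 1) + l • kroneckerSeries l + l • kroneckerSeries (l - 1) := by
  have constantCoeff_eq_zero : constantCoeff (exp ℚ - X - 1) = 0 := by simp
  have derivative_outer : derivative ℚ (psSubst (exp ℚ) (exp ℚ - X - 1)) =
      psSubst (exp ℚ) (exp ℚ - X - 1) * (exp ℚ - 1) := by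
    rw [psSubst_eq_subst _ constantCoeff_eq_zero,
      derivative_subst (HasSubst.of_constantCoeff_zero' constantCoeff_eq_zero)]
    simp [derivative_exp]
  have derivative_inner : derivative ℚ (exp ℚ - 1) = exp ℚ := by simp [derivative_exp]
  simp only [kroneckerSeries]
  rw [Derivation.leibniz, derivative_outer, derivative_pow, derivative_inner]
  rcases l with _ | l
  · simp
  · simp only [smul_eq_mul, nsmul_eq_mul, Nat.add_sub_cancel]
    ring

/-- The number `k! [xᵏ] exp(exp(x) - x - 1) (exp(x) - 1)ˡ`. -/
noncomputable def kroneckerNumber (k l : ℕ) : ℚ :=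
  k.factorial * coeff k (kroneckerSeries l)

theorem kroneckerNumber_zero_zero : kroneckerNumber 0 0 = 1 := by
  simp [kroneckerNumber, kroneckerSeries, psSubst]

theorem kroneckerNumber_eq_zero_of_lt {k l : ℕ} (h : k < l) : kroneckerNumber k l = 0 := by
  have X_dvd : X ∣ exp ℚ - 1 := X_dvd_iff.2 (by simp)
  have X_pow_dvd : X ^ l ∣ kroneckerSeries l := (pow_dvd_pow_of_dvd X_dvd l).mul_left _
  rw [kroneckerNumber, X_pow_dvd_iff.1 X_pow_dvd k h, mul_zero]

theorem kroneckerNumber_succ (k l : ℕ) :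
    kroneckerNumber (k + 1) l =
      kroneckerNumber k (l + 1) + l * kroneckerNumber k l + l * kroneckerNumber k (l - 1) := by
  have h := congrArg (coeff k) (derivative_kroneckerSeries l)
  simp only [coeff_derivative, map_add, map_nsmul] at h
  simp only [nsmul_eq_mul] at h
  simp only [kroneckerNumber, Nat.factorial_succ]
  push_cast
  linear_combination (k.factorial : ℚ) * h

end GeneratingSeries

/-! ### Deleting the first row -/

section Truncation

variable {β γ : YoungDiagram} {i i' j r n : ℕ}

theorem mem_truncate : (i, j) ∈ truncate β ↔ (i + 1, j) ∈ β := by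
  rw [← YoungDiagram.mem_cells]
  simp only [truncate, mem_image, mem_filter, YoungDiagram.mem_cells, Prod.mk.injEq, Prod.exists]
  constructor
  · rintro ⟨i', j', ⟨hmem, hpos⟩, hi, rfl⟩
    rwa [← hi, Nat.sub_add_cancel hpos]
  · exact fun h => ⟨i + 1, j, ⟨h, i.succ_pos⟩, rfl, rfl⟩

theorem rowLen_eq_rowLen_iff : β.rowLen i = γ.rowLen i' ↔ ∀ j, (i, j) ∈ β ↔ (i', j) ∈ γ := by
  simp only [YoungDiagram.mem_iff_lt_rowLen]
  exact ⟨fun h j => by rw [h], eq_of_forall_lt_iff⟩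

theorem rowLen_truncate (β : YoungDiagram) (i : ℕ) :
    (truncate β).rowLen i = β.rowLen (i + 1) :=
  rowLen_eq_rowLen_iff.2 fun _ => mem_truncate

theorem card_eq_rowLen_zero_add_card_truncate (β : YoungDiagram) :
    β.card = β.rowLen 0 + (truncate β).card := by
  have card_first_row : β.rowLen 0 = #{c ∈ β.cells | ¬ 1 ≤ c.1} := by
    rw [YoungDiagram.rowLen_eq_card, YoungDiagram.row]
    exact congrArg card (filter_congr fun c _ => by omega)
  have card_other_rows : (truncate β).card = #{c ∈ β.cells | 1 ≤ c.1} := by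
    refine card_image_of_injOn fun c hc d hd h => ?_
    have hc := (mem_filter.1 hc).2
    have hd := (mem_filter.1 hd).2
    simp only [Prod.mk.injEq] at h
    exact Prod.ext (by omega) h.2
  rw [card_first_row, card_other_rows, add_comm]
  exact (card_filter_add_card_filter_not _).symm

theorem truncate_inf (β γ : YoungDiagram) : truncate (β ⊓ γ) = truncate β ⊓ truncate γ :=
  SetLike.ext fun ⟨i, j⟩ => by simp only [mem_truncate, YoungDiagram.mem_inf]

theorem rowLen_inf (β γ : YoungDiagram) (i : ℕ) :
    (β ⊓ γ).rowLen i = min (β.rowLen i) (γ.rowLen i) :=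
  eq_of_forall_lt_iff fun j => by
    simp only [lt_min_iff, ← YoungDiagram.mem_iff_lt_rowLen, YoungDiagram.mem_inf]

theorem eq_of_truncate_eq_of_card_eq (h : truncate β = truncate γ) (hcard : β.card = γ.card) :
    β = γ := by
  have hrow : β.rowLen 0 = γ.rowLen 0 := by
    rw [card_eq_rowLen_zero_add_card_truncate β, card_eq_rowLen_zero_add_card_truncate γ, h]
      at hcard
    exact Nat.add_right_cancel hcard
  refine SetLike.ext fun ⟨i, j⟩ => ?_
  cases i with
  | zero => exact rowLen_eq_rowLen_iff.1 hrow j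
  | succ i => rw [← mem_truncate, ← mem_truncate, h]

/-- The diagram `β` with a new first row of length `r`. -/
def prependRow (β : YoungDiagram) (r : ℕ) (h : β.rowLen 0 ≤ r) : YoungDiagram where
  cells := (range r).image (Prod.mk 0) ∪ β.cells.image (Prod.map Nat.succ id)
  isLowerSet := by
    rintro ⟨i, j⟩ ⟨i', j'⟩ ⟨hi, hj⟩ hmem
    simp only [coe_union, coe_image, Set.mem_union, Set.mem_image, mem_coe, mem_range,
      YoungDiagram.mem_cells, Prod.exists, Prod.map_apply, Prod.mk.injEq, id] at hmem hi hj ⊢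
    rcases hmem with ⟨_, hjr, rfl, rfl⟩ | ⟨i, j, hij, rfl, rfl⟩
    · exact .inl ⟨j', by omega, by omega, rfl⟩
    · cases i' with
      | zero =>
        have := YoungDiagram.mem_iff_lt_rowLen.1 (β.up_left_mem i.zero_le le_rfl hij)
        exact .inl ⟨j', by omega, rfl, rfl⟩
      | succ i' => exact .inr ⟨i', j', β.up_left_mem (by omega) hj hij, rfl, rfl⟩

theorem truncate_prependRow (h : β.rowLen 0 ≤ r) : truncate (prependRow β r h) = β := by
  refine SetLike.ext fun ⟨i, j⟩ => ?_
  rw [mem_truncate, ← YoungDiagram.mem_cells]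
  simp [prependRow]

theorem rowLen_zero_prependRow (h : β.rowLen 0 ≤ r) : (prependRow β r h).rowLen 0 = r :=
  eq_of_forall_lt_iff fun j => by
    rw [← YoungDiagram.mem_iff_lt_rowLen, ← YoungDiagram.mem_cells]
    simp [prependRow]

theorem exists_truncate_eq (h : β.card + β.rowLen 0 ≤ n) :
    ∃ γ, truncate γ = β ∧ γ.card = n := by
  have hr : β.rowLen 0 ≤ n - β.card := by omega
  refine ⟨prependRow β _ hr, truncate_prependRow hr, ?_⟩
  rw [card_eq_rowLen_zero_add_card_truncate, truncate_prependRow, rowLen_zero_prependRow]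
  omega

theorem le_iff_card_inf : β ≤ γ ↔ (β ⊓ γ).card = β.card := by
  rw [← inf_eq_left]
  exact ⟨congrArg _, fun h => eq_of_le_of_card_le inf_le_left h.ge⟩

theorem truncate_mem_neighbors_iff (hcard : γ.card = β.card) :
    truncate γ ∈ neighbors (truncate β) ↔ IsSibling β γ := by
  have hβ := card_eq_rowLen_zero_add_card_truncate β
  have hγ := card_eq_rowLen_zero_add_card_truncate γ
  have hinf := card_eq_rowLen_zero_add_card_truncate (β ⊓ γ)
  rw [rowLen_inf, truncate_inf] at hinf
  have := card_mono (inf_le_left : truncate β ⊓ truncate γ ≤ truncate β)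
  have := card_mono (inf_le_right : truncate β ⊓ truncate γ ≤ truncate γ)
  rw [mem_neighbors, covBy_iff_card, covBy_iff_card, isSibling_iff_card, isSibling_iff_card,
    le_iff_card_inf, le_iff_card_inf, inf_comm (truncate γ)]
  omega

theorem sum_siblings_truncate {M : Type*} [AddCommMonoid M] {F : YoungDiagram → M}
    (hF : ∀ γ ∈ neighbors (truncate β), β.card < γ.card + γ.rowLen 0 → F γ = 0) :
    ∑ γ ∈ siblings β, F (truncate γ) = ∑ γ ∈ neighbors (truncate β), F γ := by
  have card_eq {γ : YoungDiagram} (hγ : γ ∈ siblings β) : γ.card = β.card :=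
    (isSibling_iff_card.1 (mem_siblings.1 hγ)).1.symm
  refine sum_of_injOn truncate ?_ ?_ ?_ fun _ _ => rfl
  · exact fun γ hγ δ hδ h => eq_of_truncate_eq_of_card_eq h ((card_eq hγ).trans (card_eq hδ).symm)
  · exact fun γ hγ => (truncate_mem_neighbors_iff (card_eq hγ)).2 (mem_siblings.1 hγ)
  · intro γ hγ hnot
    refine hF γ hγ ?_
    by_contra! hle
    obtain ⟨δ, rfl, hδ⟩ := exists_truncate_eq hle
    exact hnot ⟨δ, mem_siblings.2 ((truncate_mem_neighbors_iff hδ).1 hγ), rfl⟩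

theorem truncate_rowDiagram (n : ℕ) : truncate (rowDiagram n) = ⊥ := by
  refine SetLike.ext fun ⟨i, j⟩ => ?_
  rw [mem_truncate]
  simp [rowDiagram, YoungDiagram.mem_ofRowLens]

theorem card_rowDiagram (n : ℕ) : (rowDiagram n).card = n := by
  have hrow : (rowDiagram n).rowLen 0 = n := eq_of_forall_lt_iff fun j => by
    rw [← YoungDiagram.mem_iff_lt_rowLen]
    simp [rowDiagram, YoungDiagram.mem_ofRowLens]
  rw [card_eq_rowLen_zero_add_card_truncate, truncate_rowDiagram, hrow]
  rfl

theorem eq_rowDiagram_iff : β = rowDiagram n ↔ β.card = n ∧ (truncate β).card = 0 := by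
  constructor
  · rintro rfl
    exact ⟨card_rowDiagram n, by rw [truncate_rowDiagram]; rfl⟩
  · rintro ⟨hcard, htruncate⟩
    refine eq_of_truncate_eq_of_card_eq ?_ (hcard.trans (card_rowDiagram n).symm)
    rw [truncate_rowDiagram]
    exact (eq_of_le_of_card_le bot_le (htruncate.trans_le (Nat.zero_le _))).symm

theorem isCorner_truncate_iff : IsCorner (truncate β) (i, j) ↔ IsCorner β (i + 1, j) := by
  simp only [isCorner_mk_iff_rowLen, rowLen_truncate]

/-- The corners of `β` which may be distinguished in a Kronecker tableau. -/
abbrev NonfirstCorner (β : YoungDiagram) : Type :=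
  {c // IsCorner β c ∧ ¬ IsFirstCorner β c}

instance : Finite (NonfirstCorner β) :=
  .of_injective _ (Subtype.impEmbedding _ (IsCorner β) fun _ => And.left).injective

theorem card_nonfirstCorner (h : β.rowLen 1 < β.rowLen 0) :
    Nat.card (NonfirstCorner β) = #(lowerCovers (truncate β)) := by
  have not_first (i j : ℕ) : ¬ IsFirstCorner β (i + 1, j) := fun hfirst =>
    ((β.rowLen_anti 1 (i + 1) (by omega)).trans_lt h).ne hfirst.2
  rw [card_lowerCovers]
  refine (Nat.card_congr (.ofBijective
    (fun c => ⟨(c.1.1 + 1, c.1.2), isCorner_truncate_iff.1 c.2, not_first _ _⟩) ⟨?_, ?_⟩)).symm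
  · intro c d hcd
    simp only [Subtype.mk.injEq, Prod.mk.injEq, add_left_inj] at hcd
    exact Subtype.ext (Prod.ext hcd.1 hcd.2)
  · rintro ⟨⟨_ | i, j⟩, hcorner, hnot⟩
    · exact absurd ⟨hcorner, rfl⟩ hnot
    · exact ⟨⟨(i, j), isCorner_truncate_iff.2 hcorner⟩, rfl⟩

end Truncation

/-! ### Counting Kronecker tableaux -/

section KroneckerTableaux

variable {k n : ℕ} {β μ ν ν' lam : YoungDiagram} {d d' : Option (ℕ × ℕ)}

theorem KroneckerTableau.ext {S T : KroneckerTableau k μ lam} (hseq : S.seq = T.seq)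
    (hdist : S.dist = T.dist) : S = T := by
  cases S
  cases T
  congr

theorem card_kroneckerTableau_zero_self (μ : YoungDiagram) :
    Nat.card (KroneckerTableau 0 μ μ) = 1 :=
  Nat.card_eq_one_iff_unique.2
    ⟨⟨fun S T => KroneckerTableau.ext
      (funext fun i => by rw [Fin.fin_one_eq_zero i, S.init, T.init])
      (funext fun i => i.elim0)⟩,
    ⟨⟨fun _ => μ, Fin.elim0, rfl, rfl, fun i => i.elim0⟩⟩⟩

theorem isEmpty_kroneckerTableau_zero (h : μ ≠ lam) : IsEmpty (KroneckerTableau 0 μ lam) :=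
  ⟨fun T => h (T.init.symm.trans T.final)⟩

/-- The condition which `KroneckerTableau` imposes on a step from `ν` to `lam` with optional
distinguished corner `d`. -/
def IsKroneckerStep (ν lam : YoungDiagram) (d : Option (ℕ × ℕ)) : Prop :=
  (MoveCorner ν lam ∧ d = none) ∨
    (lam = ν ∧ ∃ c, d = some c ∧ IsCorner lam c ∧ ¬ IsFirstCorner lam c)

/-- The Kronecker tableau obtained by appending a step at the end. -/
def KroneckerTableau.snoc (T : KroneckerTableau k μ ν) (d : Option (ℕ × ℕ))
    (hd : IsKroneckerStep ν lam d) : KroneckerTableau (k + 1) μ lam where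
  seq := Fin.snoc (α := fun _ => YoungDiagram) T.seq lam
  dist := Fin.snoc (α := fun _ => Option (ℕ × ℕ)) T.dist d
  init := by
    rw [← Fin.castSucc_zero, Fin.snoc_castSucc]
    exact T.init
  final := Fin.snoc_last _ _
  step := by
    refine Fin.lastCases ?_ fun i => ?_
    · rw [Fin.snoc_castSucc (α := fun _ => YoungDiagram), Fin.succ_last, Fin.snoc_last,
        Fin.snoc_last, T.final]
      exact hd
    · rw [Fin.snoc_castSucc (α := fun _ => YoungDiagram), Fin.succ_castSucc,
        Fin.snoc_castSucc (α := fun _ => YoungDiagram), Fin.snoc_castSucc]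
      exact T.step i

theorem KroneckerTableau.snoc_inj {T : KroneckerTableau k μ ν} {T' : KroneckerTableau k μ ν'}
    {hd : IsKroneckerStep ν lam d} {hd' : IsKroneckerStep ν' lam d'}
    (h : T.snoc d hd = T'.snoc d' hd') : T.seq = T'.seq ∧ T.dist = T'.dist ∧ d = d' := by
  have hseq := (Fin.snoc_inj (α := fun _ => YoungDiagram)).1 (congrArg KroneckerTableau.seq h)
  have hdist := (Fin.snoc_inj (α := fun _ => Option (ℕ × ℕ))).1
    (congrArg KroneckerTableau.dist h)
  exact ⟨hseq.1, hdist⟩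

theorem KroneckerTableau.exists_eq_snoc (T : KroneckerTableau (k + 1) μ lam) :
    ∃ (ν : YoungDiagram) (d : Option (ℕ × ℕ)) (hd : IsKroneckerStep ν lam d)
      (S : KroneckerTableau k μ ν), T = S.snoc d hd := by
  have hstep := T.step (Fin.last k)
  rw [Fin.succ_last, T.final] at hstep
  refine ⟨T.seq (Fin.last k).castSucc, T.dist (Fin.last k), hstep,
    ⟨Fin.init T.seq, Fin.init T.dist, T.init, rfl, fun i => T.step i.castSucc⟩,
    KroneckerTableau.ext ?_ ?_⟩
  · have := Fin.snoc_init_self T.seq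
    rw [T.final] at this
    exact this.symm
  · exact (Fin.snoc_init_self T.dist).symm

variable (k μ lam) in
/-- A Kronecker tableau of length `k + 1` ends either by moving a corner or by distinguishing a
corner of its final shape. -/
noncomputable def kroneckerTableauSuccEquiv :
    (Σ ν : siblings lam, KroneckerTableau k μ ν) ⊕ KroneckerTableau k μ lam × NonfirstCorner lam ≃
      KroneckerTableau (k + 1) μ lam :=
  Equiv.ofBijective
    (Sum.elim
      (fun S => S.2.snoc none
        (.inl ⟨moveCorner_iff_isSibling.2 (mem_siblings.1 S.1.2).symm, rfl⟩))
      fun S => S.1.snoc (some S.2) (.inr ⟨rfl, S.2, rfl, S.2.2⟩)) <| by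
    constructor
    · rintro (⟨⟨ν, hν⟩, S⟩ | ⟨S, c⟩) (⟨⟨ν', hν'⟩, S'⟩ | ⟨S', c'⟩) h <;>
        simp only [Sum.elim_inl, Sum.elim_inr] at h <;>
        obtain ⟨hseq, hdist, hd⟩ := KroneckerTableau.snoc_inj h
      · obtain rfl : ν = ν' := S.final.symm.trans ((congrFun hseq _).trans S'.final)
        obtain rfl : S = S' := KroneckerTableau.ext hseq hdist
        rfl
      · exact absurd hd (Option.some_ne_none _).symm
      · exact absurd hd (Option.some_ne_none _)
      · exact congrArg Sum.inr (Prod.ext (KroneckerTableau.ext hseq hdist)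
          (Subtype.ext (Option.some_injective _ hd)))
    · intro T
      obtain ⟨ν, d, hd, S, rfl⟩ := T.exists_eq_snoc
      obtain ⟨hmove, rfl⟩ | ⟨rfl, c, rfl, hc⟩ := id hd
      · exact ⟨.inl ⟨⟨ν, mem_siblings.2 (moveCorner_iff_isSibling.1 hmove).symm⟩, S⟩, rfl⟩
      · exact ⟨.inr (S, ⟨c, hc⟩), rfl⟩

instance : Finite (KroneckerTableau k μ lam) := by
  induction k generalizing lam with
  | zero =>
    by_cases h : μ = lam
    · subst h
      exact Nat.finite_of_card_ne_zero
        ((card_kroneckerTableau_zero_self μ).trans_ne one_ne_zero)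
    · have := isEmpty_kroneckerTableau_zero h
      infer_instance
  | succ k ih => exact .of_equiv _ (kroneckerTableauSuccEquiv k μ lam)

variable (k μ lam) in
theorem card_kroneckerTableau_succ :
    Nat.card (KroneckerTableau (k + 1) μ lam) =
      ∑ ν ∈ siblings lam, Nat.card (KroneckerTableau k μ ν) +
        Nat.card (KroneckerTableau k μ lam) * Nat.card (NonfirstCorner lam) := by
  rw [← Nat.card_congr (kroneckerTableauSuccEquiv k μ lam), Nat.card_sum, Nat.card_sigma,
    Nat.card_prod, sum_coe_sort (siblings lam) fun ν => Nat.card (KroneckerTableau k μ ν)]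

/-- The number of Kronecker tableaux of length `k` from a long enough row to a diagram whose
truncation is `β`, see `card_kroneckerTableau`. -/
noncomputable def kroneckerWeight (k : ℕ) (β : YoungDiagram) : ℚ :=
  kroneckerNumber k β.card * sytDensity β

theorem kroneckerWeight_zero_bot : kroneckerWeight 0 ⊥ = 1 := by
  simp [kroneckerWeight, YoungDiagram.card, kroneckerNumber_zero_zero, sytDensity_bot]

theorem kroneckerWeight_eq_zero_of_lt (h : k < β.card) : kroneckerWeight k β = 0 := by
  rw [kroneckerWeight, kroneckerNumber_eq_zero_of_lt h, zero_mul]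

theorem sum_neighbors_kroneckerWeight (k : ℕ) (β : YoungDiagram) :
    ∑ γ ∈ neighbors β, kroneckerWeight k γ + #(lowerCovers β) * kroneckerWeight k β =
      kroneckerWeight (k + 1) β := by
  have sum_weight {s : Finset YoungDiagram} {l : ℕ} (hs : ∀ γ ∈ s, γ.card = l) :
      ∑ γ ∈ s, kroneckerWeight k γ = kroneckerNumber k l * ∑ γ ∈ s, sytDensity γ := by
    rw [mul_sum]
    exact sum_congr rfl fun γ hγ => by rw [kroneckerWeight, hs γ hγ]
  have card_of_lower (γ : YoungDiagram) (hγ : γ ∈ lowerCovers β) : γ.card = β.card - 1 := by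
    rw [(covBy_iff_card.1 (mem_lowerCovers.1 hγ)).2, Nat.add_sub_cancel]
  have card_of_upper (γ : YoungDiagram) (hγ : γ ∈ upperCovers β) : γ.card = β.card + 1 :=
    (covBy_iff_card.1 (mem_upperCovers.1 hγ)).2
  have card_of_sibling (γ : YoungDiagram) (hγ : γ ∈ siblings β) : γ.card = β.card :=
    (isSibling_iff_card.1 (mem_siblings.1 hγ)).1.symm
  rw [sum_neighbors, sum_weight card_of_lower, sum_weight card_of_upper,
    sum_weight card_of_sibling, sum_lowerCovers_sytDensity, sum_upperCovers_sytDensity,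
    kroneckerWeight, kroneckerWeight, kroneckerNumber_succ]
  linear_combination kroneckerNumber k β.card * sum_siblings_sytDensity β

theorem card_kroneckerTableau_zero (hcard : lam.card = n) :
    (Nat.card (KroneckerTableau 0 (rowDiagram n) lam) : ℚ) = kroneckerWeight 0 (truncate lam) := by
  by_cases h : lam = rowDiagram n
  · rw [h, card_kroneckerTableau_zero_self, truncate_rowDiagram, kroneckerWeight_zero_bot,
      Nat.cast_one]
  · have := isEmpty_kroneckerTableau_zero (Ne.symm h)
    have hpos : 0 < (truncate lam).card :=
      Nat.pos_of_ne_zero fun h0 => h (eq_rowDiagram_iff.2 ⟨hcard, h0⟩)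
    rw [kroneckerWeight_eq_zero_of_lt hpos, Nat.card_of_isEmpty, Nat.cast_zero]

theorem kroneckerWeight_mul_card_nonfirstCorner
    (h : k + (truncate lam).rowLen 0 < lam.card) :
    kroneckerWeight k (truncate lam) * Nat.card (NonfirstCorner lam) =
      #(lowerCovers (truncate lam)) * kroneckerWeight k (truncate lam) := by
  rw [rowLen_truncate, zero_add, card_eq_rowLen_zero_add_card_truncate lam] at h
  by_cases hrow : lam.rowLen 1 < lam.rowLen 0
  · rw [card_nonfirstCorner hrow, mul_comm]
  · rw [kroneckerWeight_eq_zero_of_lt (by omega), zero_mul, mul_zero]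

theorem card_kroneckerTableau (hcard : lam.card = n) (h : k + (truncate lam).rowLen 0 ≤ n) :
    (Nat.card (KroneckerTableau k (rowDiagram n) lam) : ℚ) = kroneckerWeight k (truncate lam) := by
  induction k generalizing lam with
  | zero => exact card_kroneckerTableau_zero hcard
  | succ k ih =>
    have rowLen_neighbor {γ : YoungDiagram} (hγ : γ ∈ neighbors (truncate lam)) :=
      rowLen_le_of_mem_neighbors hγ 0
    have card_sibling (ν : YoungDiagram) (hν : ν ∈ siblings lam) :
        (Nat.card (KroneckerTableau k (rowDiagram n) ν) : ℚ) = kroneckerWeight k (truncate ν) := by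
      have hν' := mem_siblings.1 hν
      have card_eq : ν.card = lam.card := (isSibling_iff_card.1 hν').1.symm
      have := rowLen_neighbor ((truncate_mem_neighbors_iff card_eq).2 hν')
      exact ih (card_eq.trans hcard) (by omega)
    have weight_eq_zero (γ : YoungDiagram) (hγ : γ ∈ neighbors (truncate lam))
        (hlt : lam.card < γ.card + γ.rowLen 0) : kroneckerWeight k γ = 0 := by
      have := rowLen_neighbor hγ
      exact kroneckerWeight_eq_zero_of_lt (by omega)
    rw [card_kroneckerTableau_succ]
    push_cast
    rw [sum_congr rfl card_sibling, sum_siblings_truncate weight_eq_zero, ih hcard (by omega),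
      kroneckerWeight_mul_card_nonfirstCorner (by omega), sum_neighbors_kroneckerWeight]

end KroneckerTableaux

/-- Corollary 3.4: with `a(k) = |KT^k_{(n_k), (n_k-ℓ, α)}|` for any admissible `n_k`,
`Σ_{k ≥ ℓ} a(k) x^k/k! = (f^α/ℓ!) e^{eˣ - x - 1} (eˣ - 1)^ℓ` in `ℚ[[x]]`. -/
theorem statement5 (ℓ : ℕ) (α : YoungDiagram) (hα : α.card = ℓ)
    (nk : ℕ → ℕ) (lamk : ℕ → YoungDiagram)
    (hnk : ∀ m, ℓ ≤ m → m + α.rowLen 0 ≤ nk m ∧ ℓ + α.rowLen 0 ≤ nk m)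
    (hlamk : ∀ m, ℓ ≤ m → truncate (lamk m) = α ∧ (lamk m).card = nk m) :
    (PowerSeries.mk fun m =>
        if ℓ ≤ m then
          (Nat.card (KroneckerTableau m (rowDiagram (nk m)) (lamk m)) : ℚ) / m.factorial
        else 0) =
      ((fSYT α : ℚ) / ℓ.factorial) •
        (psSubst (PowerSeries.exp ℚ) (PowerSeries.exp ℚ - PowerSeries.X - 1) *
          (PowerSeries.exp ℚ - 1) ^ ℓ) := by
  ext m
  have hfact : (m.factorial : ℚ) ≠ 0 := Nat.cast_ne_zero.2 m.factorial_ne_zero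
  have coeff_rhs : PowerSeries.coeff m (((fSYT α : ℚ) / ℓ.factorial) • kroneckerSeries ℓ) =
      kroneckerWeight m α / m.factorial := by
    rw [map_smul, smul_eq_mul, kroneckerWeight, kroneckerNumber, sytDensity, hα]
    field_simp
  refine Eq.trans ?_ coeff_rhs.symm
  rw [PowerSeries.coeff_mk]
  split_ifs with hm
  · obtain ⟨htruncate, hcard⟩ := hlamk m hm
    rw [card_kroneckerTableau hcard (htruncate ▸ (hnk m hm).1), htruncate]
  · rw [kroneckerWeight_eq_zero_of_lt (by omega), zero_div]

end KroneckerPaper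
end

section
/- In the formal power series ring ℚ[[x, y]] one has Σ_{n ≥ 0} Σ_{k ≥ 0} p₂(n,k) · y^k · x^n / n! = exp( y · (exp(x) − x − 1) ), where exp denotes the formal exponential series. -/
/-!
Put g = exp x - x - 1, so that m! [x^m] g is 1 or 0 according as m ≥ 2 or not. The exponential
formula for k blocks says that n! [x^n] g^k counts the partitions of an n-element set into k
blocks of size at least 2, each of them k! times, once for every ordering of its blocks: splitting
off a marked block turns k + 1 blocks into k, which on the series side is multiplication by g.
Hence Σ_n p₂(n,k) x^n / n! = g^k / k!, and this is the coefficient of y^k in exp (y g).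
-/

open Finset

namespace KroneckerPaper

section Partitions

variable {α : Type*} [GeneralizedBooleanAlgebra α] {a b : α}

theorem notMem_parts_of_sdiff (hb : b ≠ ⊥) (P : Finpartition (a \ b)) : b ∉ P.parts :=
  fun h ↦ hb (disjoint_sdiff_self_left.eq_bot_of_ge (P.le h))

variable [DecidableEq α]

theorem parts_avoid_of_mem (P : Finpartition a) (hb : b ∈ P.parts) :
    (P.avoid b).parts = P.parts.erase b := by
  have sdiff_eq {d : α} (hd : d ∈ P.parts) (hdb : d ≠ b) : d \ b = d :=
    (P.disjoint hd hb hdb).sdiff_eq_left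
  ext c
  rw [Finpartition.mem_avoid, mem_erase]
  constructor
  · rintro ⟨d, hd, hdb, rfl⟩
    have hne : d ≠ b := fun h ↦ hdb h.le
    rw [sdiff_eq hd hne]
    exact ⟨hne, hd⟩
  · rintro ⟨hcb, hc⟩
    exact ⟨c, hc, fun hle ↦ hcb (P.disjoint.eq_of_le hc hb (P.ne_bot hc) hle), sdiff_eq hc hcb⟩

/-- Inserts `b` as a new part into a partition of `a \ b`. This inverts `Finpartition.avoid` on
partitions having `b` as a part. -/
def insertPart (hb : b ≠ ⊥) (hba : b ≤ a) (P : Finpartition (a \ b)) : Finpartition a :=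
  P.extend hb disjoint_sdiff_self_left (sdiff_sup_cancel hba)

theorem parts_insertPart (hb : b ≠ ⊥) (hba : b ≤ a) (P : Finpartition (a \ b)) :
    (insertPart hb hba P).parts = insert b P.parts :=
  rfl

theorem card_parts_insertPart (hb : b ≠ ⊥) (hba : b ≤ a) (P : Finpartition (a \ b)) :
    #(insertPart hb hba P).parts = #P.parts + 1 :=
  P.card_extend b a

theorem insertPart_avoid (P : Finpartition a) (hb : b ∈ P.parts) :
    insertPart (P.ne_bot hb) (P.le hb) (P.avoid b) = P := by
  apply Finpartition.ext
  rw [parts_insertPart, parts_avoid_of_mem P hb, insert_erase hb]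

theorem avoid_insertPart (hb : b ≠ ⊥) (hba : b ≤ a) (P : Finpartition (a \ b)) :
    (insertPart hb hba P).avoid b = P := by
  apply Finpartition.ext
  rw [parts_avoid_of_mem _ (mem_insert_self b P.parts), parts_insertPart,
    erase_insert (notMem_parts_of_sdiff hb P)]

end Partitions

section ExponentialFormula

open scoped Nat PowerSeries
open PowerSeries (C X coeff constantCoeff exp)

variable {α R : Type*} [DecidableEq α] [CommSemiring R]

/-- The partial exponential Bell polynomial `B_{n,k}(w 1, w 2, …)` for `n = #s`: the total weight
of the partitions of `s` into `k` blocks, where a block of size `m` has weight `w m`. -/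
def partialBell (w : ℕ → R) (s : Finset α) (k : ℕ) : R :=
  ∑ P : Finpartition s with #P.parts = k, ∏ b ∈ P.parts, w #b

theorem partialBell_zero (w : ℕ → R) (s : Finset α) :
    partialBell w s 0 = if s = ∅ then 1 else 0 := by
  rw [partialBell]
  simp only [card_eq_zero, Finpartition.parts_eq_empty_iff, bot_eq_empty]
  split_ifs with hs
  · subst hs
    rw [filter_true_of_mem fun _ _ ↦ rfl, ← bot_eq_empty, Fintype.sum_unique,
      Finpartition.default_eq_empty, Finpartition.empty_parts, prod_empty]
  · rw [filter_false_of_mem fun _ _ ↦ hs, sum_empty]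

theorem sum_parts_erase_eq_sum_sdiff {M : Type*} [AddCommMonoid M]
    (f : Finset α → Finset (Finset α) → M) (s : Finset α) (k : ℕ) :
    ∑ P : Finpartition s with #P.parts = k + 1, ∑ b ∈ P.parts, f b (P.parts.erase b) =
      ∑ b ∈ s.powerset with b.Nonempty, ∑ Q : Finpartition (s \ b) with #Q.parts = k,
        f b Q.parts := by
  rw [sum_sigma', sum_sigma']
  have ne_bot_and_le {y : Σ b, Finpartition (s \ b)}
      (hy : y ∈ ({b ∈ s.powerset | b.Nonempty}).sigma
        fun b ↦ ({Q | #Q.parts = k} : Finset (Finpartition (s \ b)))) : y.1 ≠ ⊥ ∧ y.1 ≤ s := by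
    have hb := mem_filter.1 (mem_sigma.1 hy).1
    exact ⟨hb.2.ne_empty, mem_powerset.1 hb.1⟩
  refine sum_bij' (fun x _ ↦ ⟨x.2, x.1.avoid x.2⟩)
    (fun y hy ↦ ⟨insertPart (ne_bot_and_le hy).1 (ne_bot_and_le hy).2 y.2, y.1⟩) ?_ ?_ ?_ ?_ ?_
  · rintro ⟨P, b⟩ hx
    simp only [mem_sigma, mem_filter, mem_univ, true_and, mem_powerset] at hx ⊢
    obtain ⟨hP, hb⟩ := hx
    refine ⟨⟨P.le hb, P.nonempty_of_mem_parts hb⟩, ?_⟩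
    rw [parts_avoid_of_mem P hb, card_erase_of_mem hb, hP, Nat.add_sub_cancel]
  · rintro ⟨b, Q⟩ hy
    have hQ : #Q.parts = k := (mem_filter.1 (mem_sigma.1 hy).2).2
    refine mem_sigma.2 ⟨mem_filter.2 ⟨mem_univ _, ?_⟩, mem_insert_self b Q.parts⟩
    rw [card_parts_insertPart, hQ]
  · rintro ⟨P, b⟩ hx
    simp only [insertPart_avoid P (mem_sigma.1 hx).2]
  · rintro ⟨b, Q⟩ _
    simp only [avoid_insertPart]
  · rintro ⟨P, b⟩ hx
    simp only [parts_avoid_of_mem P (mem_sigma.1 hx).2]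

theorem succ_mul_partialBell_succ (w : ℕ → R) (s : Finset α) (k : ℕ) :
    (k + 1) * partialBell w s (k + 1) =
      ∑ b ∈ s.powerset with b.Nonempty, w #b * partialBell w (s \ b) k := by
  calc (k + 1) * partialBell w s (k + 1)
      = ∑ P : Finpartition s with #P.parts = k + 1, ∑ _b ∈ P.parts, ∏ c ∈ P.parts, w #c := by
        rw [partialBell, mul_sum]
        refine sum_congr rfl fun P hP ↦ ?_
        rw [sum_const, (mem_filter.1 hP).2, nsmul_eq_mul, Nat.cast_succ]
    _ = ∑ P : Finpartition s with #P.parts = k + 1,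
          ∑ b ∈ P.parts, w #b * ∏ c ∈ P.parts.erase b, w #c :=
        sum_congr rfl fun P _ ↦ sum_congr rfl fun _ hb ↦
          (mul_prod_erase P.parts (fun c ↦ w #c) hb).symm
    _ = ∑ b ∈ s.powerset with b.Nonempty, w #b * partialBell w (s \ b) k := by
        simp only [sum_parts_erase_eq_sum_sdiff fun b B ↦ w #b * ∏ c ∈ B, w #c, partialBell,
          mul_sum]

theorem factorial_mul_partialBell {g : R⟦X⟧} (hg : constantCoeff g = 0) (s : Finset α)
    (k : ℕ) : k ! * partialBell (fun m ↦ m ! * coeff m g) s k = (#s)! * coeff #s (g ^ k) := by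
  set w : ℕ → R := fun m ↦ m ! * coeff m g with hw
  induction k generalizing s with
  | zero =>
    simp only [partialBell_zero, pow_zero, PowerSeries.coeff_one, card_eq_zero]
    split_ifs with hs <;> simp [hs]
  | succ k ih =>
    have w_zero : w 0 = 0 := by simp [hw, hg]
    calc ((k + 1)! : R) * partialBell w s (k + 1)
        = k ! * ((k + 1) * partialBell w s (k + 1)) := by
          rw [Nat.factorial_succ]; push_cast; ring
      _ = ∑ b ∈ s.powerset, w #b * (k ! * partialBell w (s \ b) k) := by
          rw [succ_mul_partialBell_succ, mul_sum, sum_filter_of_ne]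
          · exact sum_congr rfl fun b _ ↦ by ring
          · intro b _ hb
            contrapose! hb
            simp [hb, w_zero]
      _ = ∑ b ∈ s.powerset, w #b * ((#s - #b)! * coeff (#s - #b) (g ^ k)) :=
          sum_congr rfl fun b hb ↦ by rw [ih, card_sdiff_of_subset (mem_powerset.1 hb)]
      _ = ∑ m ∈ range (#s + 1), (#s).choose m • (w m * ((#s - m)! * coeff (#s - m) (g ^ k))) :=
          sum_powerset_apply_card fun m ↦ w m * ((#s - m)! * coeff (#s - m) (g ^ k))
      _ = ∑ m ∈ range (#s + 1), (#s)! * (coeff m g * coeff (#s - m) (g ^ k)) := by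
          refine sum_congr rfl fun m hm ↦ ?_
          rw [← Nat.choose_mul_factorial_mul_factorial (mem_range_succ_iff.1 hm)]
          simp only [hw, nsmul_eq_mul]
          push_cast
          ring
      _ = (#s)! * coeff #s (g ^ (k + 1)) := by
          rw [pow_succ', PowerSeries.coeff_mul, Nat.sum_antidiagonal_eq_sum_range_succ_mk, mul_sum]

theorem p2_eq_partialBell (R : Type*) [CommSemiring R] (n k : ℕ) :
    (p2 n k : R) = partialBell (fun m ↦ if 2 ≤ m then 1 else 0) (univ : Finset (Fin n)) k := by
  rw [p2, partialBell, Nat.subtype_card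
    {P : Finpartition (univ : Finset (Fin n)) | #P.parts = k ∧ ∀ b ∈ P.parts, 2 ≤ #b} (by simp)]
  simp only [prod_ite_zero, prod_const_one, sum_boole, filter_filter]

theorem factorial_mul_coeff_exp_sub_X_sub_one (R : Type*) [Ring R] [Algebra ℚ R] (m : ℕ) :
    (m ! : R) * coeff m (exp R - X - 1) = if 2 ≤ m then 1 else 0 := by
  have factorial_mul_inv : (m ! : R) * algebraMap ℚ R (1 / m !) = 1 := by
    rw [← map_natCast (algebraMap ℚ R), ← map_mul,
      mul_one_div_cancel (Nat.cast_ne_zero.2 m.factorial_ne_zero), map_one]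
  rw [map_sub, map_sub, PowerSeries.coeff_exp, mul_sub, mul_sub, factorial_mul_inv,
    PowerSeries.coeff_X, PowerSeries.coeff_one]
  rcases m with _ | _ | m <;> simp

theorem factorial_mul_p2 (R : Type*) [CommRing R] [Algebra ℚ R] (n k : ℕ) :
    (k ! * p2 n k : R) = n ! * coeff n ((exp R - X - 1) ^ k) := by
  have exponential_formula :=
    factorial_mul_partialBell (g := exp R - X - 1) (by simp) (univ : Finset (Fin n)) k
  simp_rw [factorial_mul_coeff_exp_sub_X_sub_one] at exponential_formula
  rwa [← p2_eq_partialBell, card_univ, Fintype.card_fin] at exponential_formula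

theorem coeff_coeff_psSubst_C_X_mul_map_C {R S : Type*} [CommSemiring R] [CommSemiring S]
    [Algebra R S] (f : R⟦X⟧) {g : S⟦X⟧} (hg : constantCoeff g = 0) (n k : ℕ) :
    coeff k (coeff n (psSubst f (C (R := S⟦X⟧) X * PowerSeries.map C g))) =
      algebraMap R S (coeff k f) * coeff n (g ^ k) := by
  have coeff_term (m : ℕ) :
      coeff k (algebraMap R S⟦X⟧ (coeff m f) *
        coeff n ((C (R := S⟦X⟧) X * PowerSeries.map C g) ^ m)) =
      if k = m then algebraMap R S (coeff m f) * coeff n (g ^ m) else 0 := by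
    rw [mul_pow, ← map_pow, ← map_pow, PowerSeries.coeff_C_mul, PowerSeries.coeff_map,
      PowerSeries.algebraMap_apply, PowerSeries.coeff_C_mul, PowerSeries.coeff_mul_C,
      PowerSeries.coeff_X_pow, ite_mul, one_mul, zero_mul, mul_ite, mul_zero]
  rw [psSubst, PowerSeries.coeff_mk, map_sum, sum_congr rfl fun m _ ↦ coeff_term m, sum_ite_eq,
    ite_eq_left_iff, mem_range_succ_iff, not_le]
  -- The term `m = k` is then missing from the truncated sum in `psSubst`, but it vanishes anyway.
  intro hnk
  rw [PowerSeries.coeff_of_lt_order n ((Nat.cast_lt.2 hnk).trans_le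
    (PowerSeries.le_order_pow_of_constantCoeff_eq_zero k hg)), mul_zero]

end ExponentialFormula

/-- The bivariate generating function of Remark 3.4:
`Σ_{n,k} p₂(n,k) y^k x^n/n! = e^{y(eˣ - x - 1)}`, in `ℚ[[y]][[x]]` (outer variable `x`,
inner variable `y`). -/
theorem statement7 :
    (PowerSeries.mk fun n =>
        (PowerSeries.mk fun k => (p2 n k : ℚ) / n.factorial : PowerSeries ℚ)) =
      psSubst (PowerSeries.exp ℚ)
        ((PowerSeries.C (R := PowerSeries ℚ) PowerSeries.X) *
          (PowerSeries.exp (PowerSeries ℚ) - PowerSeries.X - 1)) := by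
  have map_g : PowerSeries.exp (PowerSeries ℚ) - PowerSeries.X - 1 =
      PowerSeries.map PowerSeries.C (PowerSeries.exp ℚ - PowerSeries.X - 1) := by
    simp only [map_sub, PowerSeries.map_exp, PowerSeries.map_X, map_one]
  ext n k
  have p2_div_factorial : (p2 n k : ℚ) / n.factorial = 1 / k.factorial *
      PowerSeries.coeff n ((PowerSeries.exp ℚ - PowerSeries.X - 1) ^ k) := by
    rw [div_eq_iff (Nat.cast_ne_zero.2 n.factorial_ne_zero), mul_assoc, one_div,
      eq_inv_mul_iff_mul_eq₀ (Nat.cast_ne_zero.2 k.factorial_ne_zero), factorial_mul_p2, mul_comm]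
  rw [map_g, coeff_coeff_psSubst_C_X_mul_map_C _ (by simp), PowerSeries.coeff_mk,
    PowerSeries.coeff_mk, p2_div_factorial, PowerSeries.coeff_exp, Algebra.algebraMap_self,
    RingHom.id_apply, RingHom.id_apply]

end KroneckerPaper
end

section
/- Let n and k be positive integers with n ≥ k. Then Σ_{σ ∈ 𝔖_n} (fix(σ) − 1)^k = n! · Σ_{j=0}^{⌊k/2⌋} p₂(k, j), where fix(σ) denotes the number of fixed points of the permutation σ and the sum on the left is over all permutations of {1, …, n}; equivalently, the average of (fix(σ) − 1)^k over 𝔖_n equals the number of partitions of a k-element set into blocks all of size at least 2. (This is the multiplicity of the trivial character in the k-th Kronecker power of the irreducible character χ^{(n−1,1)} of 𝔖_n, whose value at σ is fix(σ) − 1.) -/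
open Finset

namespace KroneckerPaper

/-- The number of fixed points of a permutation of `Fin n`. -/
def fixCount {n : ℕ} (σ : Equiv.Perm (Fin n)) : ℕ :=
  (Finset.univ.filter fun x => σ x = x).card

/-!
Burnside's lemma for `𝔖_n` acting on the functions `ι → Fin n` says that `∑ σ, fix(σ) ^ |ι|` is
`n!` times the number of orbits. When `|ι| ≤ n`, two functions are in the same orbit exactly when
they have the same kernel, and every equivalence relation on `ι` is a kernel, so the number of
orbits is the number of equivalence relations on `ι`; only the `|ι|`-fold transitivity of the
action matters here.

Expanding `(fix(σ) - 1) ^ k` over the subsets `t` of a `k`-element set, the term of `t`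
contributes `(-1) ^ |t|` times the number of equivalence relations on the complement of `t`, i.e.
of those equivalence relations on the whole set for which every point of `t` is a singleton class.
By inclusion-exclusion, the alternating sum counts the relations without singleton classes.
-/

section IsolatedPoints

variable {ι : Type*}

/-- A point is isolated for an equivalence relation when its class is a singleton. -/
def IsIsolated (s : Setoid ι) (i : ι) : Prop :=
  ∀ j, s i j → j = i

lemma isIsolated_map_val {t : Set ι} (r : Setoid ↥tᶜ) {i : ι} (hi : i ∈ t) :
    IsIsolated (r.map Subtype.val) i := by
  intro j hij
  rw [Setoid.coe_map_of_ker_le r _ (Setoid.ker_eq_bot_iff.2 Subtype.val_injective ▸ bot_le)] at hij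
  rcases hij with ⟨⟨_, hit⟩, _, _, rfl, _⟩ | rfl
  · exact absurd hi hit
  · rfl

lemma map_val_comap_val {t : Set ι} {s : Setoid ι} (hs : ∀ i ∈ t, IsIsolated s i) :
    (s.comap (Subtype.val : ↥tᶜ → ι)).map Subtype.val = s := by
  refine le_antisymm (Setoid.eqvGen_le ?_) fun i j hij => ?_
  · rintro _ _ ⟨_, _, h, rfl, rfl⟩
    exact h
  · by_cases hi : i ∈ t
    · exact hs i hi j hij ▸ Setoid.refl' _ j
    by_cases hj : j ∈ t
    · exact hs j hj i (s.symm hij) ▸ Setoid.refl' _ i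
    exact Setoid.le_comap_map (f := Subtype.val) (x := ⟨i, hi⟩) (y := ⟨j, hj⟩) hij

/-- Restriction to the complement of `t` identifies the equivalence relations for which all points
of `t` are isolated with the equivalence relations on that complement. -/
def isolatingSetoidEquiv (t : Set ι) :
    {s : Setoid ι // ∀ i ∈ t, IsIsolated s i} ≃ Setoid ↥tᶜ where
  toFun s := s.1.comap Subtype.val
  invFun r := ⟨r.map Subtype.val, fun _ => isIsolated_map_val r⟩
  left_inv s := Subtype.ext (map_val_comap_val s.2)
  right_inv r := Setoid.comap_map_eq _ r Subtype.val_injective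

instance finite_setoid [Finite ι] : Finite (Setoid ι) :=
  Finite.of_injective (fun (s : Setoid ι) => ⇑s) fun _ _ => Setoid.eq_iff_rel_eq.2

lemma card_setoid_forall_not_isIsolated [Fintype ι] :
    (Nat.card {s : Setoid ι // ∀ i, ¬ IsIsolated s i} : ℤ) =
      ∑ t : Finset ι, (-1) ^ #t * (Nat.card (Setoid ↥(t : Set ι)ᶜ) : ℤ) := by
  classical
  have := Fintype.ofFinite (Setoid ι)
  have inclusion_exclusion := inclusion_exclusion_card_inf_compl univ
    fun i => univ.filter fun s : Setoid ι => IsIsolated s i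
  rw [powerset_univ] at inclusion_exclusion
  convert inclusion_exclusion using 2 with t
  · rw [Nat.subtype_card]
    simp [mem_inf]
  · rw [← Nat.card_congr (isolatingSetoidEquiv (t : Set ι)), Nat.subtype_card]
    simp [mem_inf]

end IsolatedPoints

section Burnside

open MulAction

variable {G α ι : Type*}

lemma ker_surjective_of_embedding (e : ι ↪ α) :
    Function.Surjective (Setoid.ker : (ι → α) → Setoid ι) := fun s =>
  ⟨fun i => e (⟦i⟧ : Quotient s).out, Setoid.ext fun i j => by
    rw [Setoid.ker_def, e.apply_eq_iff_eq, Quotient.out_inj, Quotient.eq]⟩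

variable [Group G] [MulAction G α]

lemma ker_smul (g : G) (f : ι → α) : Setoid.ker (g • f) = Setoid.ker f :=
  Setoid.ext fun _ _ => smul_left_cancel_iff g

lemma card_fixedBy_pi [Finite ι] (g : G) :
    Nat.card (fixedBy (ι → α) g) = Nat.card (fixedBy α g) ^ Nat.card ι := by
  have fixedBy_pi : fixedBy (ι → α) g = Set.univ.pi fun _ => fixedBy α g := by
    ext f
    simp [funext_iff]
  rw [fixedBy_pi, Nat.card_congr (Equiv.Set.univPi _), Nat.card_fun]

lemma isPretransitive_embedding_of_card_le [Finite ι] {k : ℕ} [IsMultiplyPretransitive G α k]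
    (hιk : Nat.card ι ≤ k) (hkα : k ≤ ENat.card α) : IsPretransitive G (ι ↪ α) := by
  have : IsMultiplyPretransitive G α (Nat.card ι) := isMultiplyPretransitive_of_le' hιk hkα
  let e := Finite.equivFin ι
  refine IsPretransitive.of_surjective_map (f := MulActionHom.embMap G α e.toEmbedding)
    (fun x => ⟨e.symm.toEmbedding.trans x, ?_⟩) this
  exact DFunLike.ext _ _ fun i => congrArg x (e.symm_apply_apply i)

variable [Finite ι] [IsMultiplyPretransitive G α (Nat.card ι)]

lemma exists_smul_eq_of_ker_eq (hια : Nat.card ι ≤ ENat.card α) {f f' : ι → α}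
    (h : Setoid.ker f = Setoid.ker f') : ∃ g : G, g • f = f' := by
  have : IsPretransitive G (Quotient (Setoid.ker f) ↪ α) :=
    isPretransitive_embedding_of_card_le
      (Nat.card_le_card_of_surjective _ Quotient.mk_surjective) hια
  let x : Quotient (Setoid.ker f) ↪ α := ⟨Setoid.kerLift f, Setoid.kerLift_injective f⟩
  let x' : Quotient (Setoid.ker f) ↪ α :=
    ⟨Quotient.lift f' fun _ _ hij => (h ▸ hij : Setoid.ker f' _ _),
      (Setoid.lift_injective_iff_ker_eq_of_le h.le).2 h.symm⟩
  obtain ⟨g, hg⟩ := exists_smul_eq G x x'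
  exact ⟨g, funext fun i => DFunLike.congr_fun hg ⟦i⟧⟩

lemma orbitRel_eq_ker_ker (hια : Nat.card ι ≤ ENat.card α) :
    orbitRel G (ι → α) = Setoid.ker Setoid.ker := by
  ext f f'
  constructor
  · rintro ⟨g, rfl⟩
    exact ker_smul g f'
  · exact fun h => exists_smul_eq_of_ker_eq hια h.symm

lemma card_orbitRel_quotient_pi (e : ι ↪ α) :
    Nat.card (orbitRel.Quotient G (ι → α)) = Nat.card (Setoid ι) := by
  have hια : Nat.card ι ≤ ENat.card α :=
    ENat.card_eq_coe_natCard ι ▸ ENat.card_le_card_of_injective e.injective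
  rw [orbitRel.Quotient, orbitRel_eq_ker_ker hια]
  exact Nat.card_congr (Setoid.quotientKerEquivOfSurjective _ (ker_surjective_of_embedding e))

variable [Fintype G] [Finite α]

lemma sum_card_fixedBy_pow (e : ι ↪ α) :
    ∑ g : G, Nat.card (fixedBy α g) ^ Nat.card ι = Nat.card G * Nat.card (Setoid ι) := by
  classical
  have := Fintype.ofFinite α
  have := Fintype.ofFinite ι
  have := Fintype.ofFinite (orbitRel.Quotient G (ι → α))
  have burnside := sum_card_fixedBy_eq_card_orbits_mul_card_group G (ι → α)
  simp only [← Nat.card_eq_fintype_card, card_fixedBy_pi] at burnside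
  rw [burnside, mul_comm, ← card_orbitRel_quotient_pi (G := G) e]

lemma sum_card_fixedBy_sub_one_pow (e : ι ↪ α) :
    ∑ g : G, ((Nat.card (fixedBy α g) : ℤ) - 1) ^ Nat.card ι =
      Nat.card G * Nat.card {s : Setoid ι // ∀ i, ¬ IsIsolated s i} := by
  have := Fintype.ofFinite ι
  have sum_subset (t : Finset ι) :
      ∑ g : G, (Nat.card (fixedBy α g) : ℤ) ^ (Nat.card ι - #t) =
        Nat.card G * Nat.card (Setoid ↥(t : Set ι)ᶜ) := by
    have card_compl_coe : Nat.card ↥(t : Set ι)ᶜ = Nat.card ι - #t := by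
      rw [Nat.card_coe_set_eq, Set.ncard_compl, Set.ncard_coe_finset]
    have : IsMultiplyPretransitive G α (Nat.card ↥(t : Set ι)ᶜ) :=
      isMultiplyPretransitive_of_le (card_compl_coe.trans_le (Nat.sub_le _ _))
        (Nat.card_le_card_of_injective e e.injective)
    rw [← card_compl_coe]
    exact_mod_cast sum_card_fixedBy_pow ((Function.Embedding.subtype _).trans e)
  calc ∑ g : G, ((Nat.card (fixedBy α g) : ℤ) - 1) ^ Nat.card ι
      = ∑ g : G, ∑ t : Finset ι,
          (-1) ^ #t * (Nat.card (fixedBy α g) : ℤ) ^ (Nat.card ι - #t) := by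
        refine sum_congr rfl fun g _ => ?_
        rw [Nat.card_eq_fintype_card (α := ι), Fintype.sum_pow_mul_eq_add_pow, neg_add_eq_sub]
    _ = ∑ t : Finset ι, (-1) ^ #t * (Nat.card G * Nat.card (Setoid ↥(t : Set ι)ᶜ) : ℤ) := by
        rw [sum_comm]
        simp only [← mul_sum, sum_subset]
    _ = Nat.card G * Nat.card {s : Setoid ι // ∀ i, ¬ IsIsolated s i} := by
        simp only [card_setoid_forall_not_isIsolated, mul_sum, mul_left_comm]

end Burnside

section Finpartition

variable {ι : Type*} [DecidableEq ι]

lemma parts_eq_image_part {s : Finset ι} (P : Finpartition s) : P.parts = s.image P.part := by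
  refine coe_injective ?_
  rw [coe_image, P.part_surjOn.image_eq_of_mapsTo fun _ hi => P.part_mem.2 hi]

lemma mul_card_parts_le_card {s : Finset ι} {P : Finpartition s} {m : ℕ}
    (hP : ∀ b ∈ P.parts, m ≤ #b) : m * #P.parts ≤ #s := by
  rw [← P.sum_card_parts, mul_comm]
  exact card_nsmul_le_sum _ _ _ hP

variable [Fintype ι]

lemma ker_part_apply_iff (P : Finpartition (univ : Finset ι)) {i j : ι} :
    Setoid.ker P.part i j ↔ j ∈ P.part i := by
  rw [Setoid.ker_def, eq_comm, P.mem_part_iff_part_eq_part (mem_univ j) (mem_univ i)]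

open Classical in
/-- Partitions of a finite type and equivalence relations on it are the same thing: two points are
related when they lie in the same block. -/
noncomputable def finpartitionEquivSetoid : Finpartition (univ : Finset ι) ≃ Setoid ι where
  toFun P := Setoid.ker P.part
  invFun s := Finpartition.ofSetoid s
  left_inv P := Finpartition.ext <| by
    rw [parts_eq_image_part, parts_eq_image_part P]
    congr! 1
    ext i j
    rw [Finpartition.mem_part_ofSetoid_iff_rel, ker_part_apply_iff]
  right_inv s := Setoid.ext fun i j => by
    rw [ker_part_apply_iff, Finpartition.mem_part_ofSetoid_iff_rel]

lemma forall_two_le_card_iff_forall_not_isIsolated (P : Finpartition (univ : Finset ι)) :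
    (∀ b ∈ P.parts, 2 ≤ #b) ↔ ∀ i, ¬ IsIsolated (finpartitionEquivSetoid P) i := by
  simp only [parts_eq_image_part P, forall_mem_image, mem_univ, true_imp_iff]
  refine forall_congr' fun i => ?_
  have hi : i ∈ P.part i := P.mem_part (mem_univ i)
  rw [Nat.succ_le_iff, one_lt_card_iff_nontrivial, nontrivial_iff_ne_singleton hi, Ne,
    eq_singleton_iff_unique_mem, and_iff_right hi, not_iff_not]
  exact forall_congr' fun j => imp_congr_left (ker_part_apply_iff P).symm

end Finpartition

lemma sum_p2_eq_card_finpartition (k : ℕ) :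
    ∑ j ∈ range (k / 2 + 1), p2 k j =
      Nat.card {P : Finpartition (univ : Finset (Fin k)) // ∀ b ∈ P.parts, 2 ≤ #b} := by
  classical
  rw [Nat.subtype_card (univ.filter fun P => ∀ b ∈ P.parts, 2 ≤ #b) (by simp),
    card_eq_sum_card_fiberwise (f := fun P => #P.parts) (t := range (k / 2 + 1))]
  · refine sum_congr rfl fun j _ => ?_
    rw [p2, Nat.subtype_card]
    simp [and_comm]
  · intro P hP
    have hPk : 2 * #P.parts ≤ #(univ : Finset (Fin k)) :=
      mul_card_parts_le_card (by simpa using hP)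
    rw [card_fin] at hPk
    simp only [coe_range, Set.mem_Iio]
    omega

lemma sum_p2_eq_card_setoid (k : ℕ) :
    ∑ j ∈ range (k / 2 + 1), p2 k j =
      Nat.card {s : Setoid (Fin k) // ∀ i, ¬ IsIsolated s i} := by
  rw [sum_p2_eq_card_finpartition]
  exact Nat.card_congr (finpartitionEquivSetoid.subtypeEquiv
    forall_two_le_card_iff_forall_not_isIsolated)

theorem statement9_general {G α : Type*} [Group G] [Fintype G] [MulAction G α] [Finite α] {k : ℕ}
    [MulAction.IsMultiplyPretransitive G α k] (hk : k ≤ Nat.card α) :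
    ∑ g : G, ((Nat.card (MulAction.fixedBy α g) : ℤ) - 1) ^ k =
      Nat.card G * ∑ j ∈ range (k / 2 + 1), (p2 k j : ℤ) := by
  have : MulAction.IsMultiplyPretransitive G α (Nat.card (Fin k)) := by rwa [Nat.card_fin]
  let e : Fin k ↪ α := (Fin.castLEEmb hk).trans (Finite.equivFin α).symm.toEmbedding
  rw [← Nat.cast_sum, sum_p2_eq_card_setoid, ← sum_card_fixedBy_sub_one_pow e, Nat.card_fin]

/-- For `n ≥ k`, `Σ_{σ ∈ 𝔖_n} (fix σ - 1)^k = n! ⬝ Σ_{j=0}^{⌊k/2⌋} p₂(k, j)`: the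
multiplicity of the trivial character in `(χ^{(n-1,1)})^{⊗ k}` is the number of set
partitions of a `k`-set with no singleton blocks. -/
theorem statement9 (n k : ℕ) (hn : 1 ≤ n) (hk : 1 ≤ k) (hkn : k ≤ n) :
    ∑ σ : Equiv.Perm (Fin n), ((fixCount σ : ℤ) - 1) ^ k =
      (n.factorial : ℤ) * ∑ j ∈ Finset.range (k / 2 + 1), (p2 k j : ℤ) := by
  have := Equiv.Perm.isMultiplyPretransitive (Fin n) k
  simpa [fixCount, Nat.subtype_card, MulAction.fixedBy, Fintype.card_perm] using
    statement9_general (G := Equiv.Perm (Fin n)) (hkn.trans_eq (Nat.card_fin n).symm)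

end KroneckerPaper
end

section
/- For every integer n ≥ 2, Σ_{σ ∈ 𝔖_n} sgn(σ) · (fix(σ) − 1)^{n−1} = n!, where the sum is over all permutations of {1, …, n}, sgn(σ) is the sign of σ, and fix(σ) is the number of fixed points of σ. (Equivalently, the sign character occurs with multiplicity exactly 1 in the (n−1)-st Kronecker power of the irreducible character χ^{(n−1,1)} of 𝔖_n, whose value at σ is fix(σ) − 1.) -/
open Finset

namespace KroneckerPaper

/-!
The determinant of the matrix with `X` on the diagonal and `1` elsewhere is, by its Leibniz
expansion, the signed generating polynomial of the number of fixed points. As a scalar matrix plus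
a matrix of rank at most one, it also equals `(X - 1) ^ n + n * (X - 1) ^ (n - 1)`. Evaluating at
the operator `E f = f (· + h)`, for which `E - 1` is the forward difference `Δ = fwdDiff h`,
gives `∑ σ, sign σ • f (y + fix σ • h) = Δ^[n] f y + n • Δ^[n - 1] f y`. For `f = (· ^ (n - 1))`
and `h = 1` the first term vanishes and the second one is `n * (n - 1)!`, whatever `y` is.
-/

section SignedFixedPoints

open Equiv Polynomial fwdDiff_aux

variable {α : Type*} [Fintype α] [DecidableEq α]

lemma det_of_ite_eq {R : Type*} [CommRing R] (a b : R) :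
    (Matrix.of fun i j : α => if i = j then a else b).det =
      (a - b) ^ Fintype.card α + Fintype.card α * b * (a - b) ^ (Fintype.card α - 1) := by
  have scalar_sub_rankOne : (Matrix.of fun i j : α => if i = j then a else b) =
      Matrix.scalar α (a - b) - Matrix.vecMulVec (fun _ => -b) 1 := by
    ext i j
    by_cases hij : i = j <;> simp [hij]
  rw [scalar_sub_rankOne, ← Matrix.eval_charpoly, Matrix.charpoly_vecMulVec]
  simp [dotProduct]

lemma det_of_ite_eq_one_eq_sum {R : Type*} [CommRing R] (a : R) :
    (Matrix.of fun i j : α => if i = j then a else 1).det =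
      ∑ σ : Perm α, (Perm.sign σ : ℤ) • a ^ #{i | σ i = i} := by
  simp [Matrix.det_apply, prod_ite, Units.smul_def]

lemma sum_sign_smul_pow_card_fixed {A : Type*} [Ring A] (a : A) :
    ∑ σ : Perm α, (Perm.sign σ : ℤ) • a ^ #{i | σ i = i} =
      (a - 1) ^ Fintype.card α + Fintype.card α * (a - 1) ^ (Fintype.card α - 1) := by
  have polynomial_identity := (det_of_ite_eq_one_eq_sum (α := α) (X : ℤ[X])).symm.trans
    (det_of_ite_eq X 1)
  simpa using congrArg (aeval a) polynomial_identity

lemma sum_sign_smul_apply_add_card_fixed_smul {M G : Type*} [AddCommMonoid M] [AddCommGroup G]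
    (f : M → G) (y h : M) :
    ∑ σ : Perm α, (Perm.sign σ : ℤ) • f (y + #{i | σ i = i} • h) =
      (fwdDiff h)^[Fintype.card α] f y + Fintype.card α • (fwdDiff h)^[Fintype.card α - 1] f y := by
  have sum_shift := congrArg (fun T : Module.End ℤ (M → G) => T f y)
    (sum_sign_smul_pow_card_fixed (α := α) (shiftₗ M G h))
  have shift_sub_one : shiftₗ M G h - 1 = fwdDiffₗ M G h := add_sub_cancel_right _ _
  simpa [shift_sub_one, shiftₗ_pow_apply, ← coe_fwdDiffₗ_pow] using sum_shift

theorem statement10_general [Nonempty α] {R : Type*} [CommRing R] (y : R) :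
    ∑ σ : Perm α, (Perm.sign σ : R) * (#{i | σ i = i} + y) ^ (Fintype.card α - 1) =
      (Fintype.card α).factorial := by
  have card_ne_zero : Fintype.card α ≠ 0 := Fintype.card_ne_zero
  have sum_eq_fwdDiff := sum_sign_smul_apply_add_card_fixed_smul (α := α)
    (fun r : R => r ^ (Fintype.card α - 1)) y 1
  rw [fwdDiff_iter_pow_eq_zero_of_lt (Nat.sub_one_lt card_ne_zero), fwdDiff_iter_eq_factorial]
    at sum_eq_fwdDiff
  rw [← Nat.mul_factorial_pred card_ne_zero]
  simpa [add_comm] using sum_eq_fwdDiff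

end SignedFixedPoints

/-- For `n ≥ 2`, `Σ_{σ ∈ 𝔖_n} sgn(σ) (fix σ - 1)^{n-1} = n!`: the sign character occurs
with multiplicity exactly `1` in `(χ^{(n-1,1)})^{⊗ (n-1)}`. -/
theorem statement10 (n : ℕ) (hn : 2 ≤ n) :
    ∑ σ : Equiv.Perm (Fin n), (Equiv.Perm.sign σ : ℤ) * ((fixCount σ : ℤ) - 1) ^ (n - 1) =
      (n.factorial : ℤ) := by
  have : Nonempty (Fin n) := ⟨⟨0, by omega⟩⟩
  simpa [fixCount, sub_eq_add_neg] using statement10_general (α := Fin n) (-1 : ℤ)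

end KroneckerPaper
end

section
/- Let n and k be positive integers and λ = (λ₁, …, λ_m) a partition of n. If k < n − λ₁, then there is no Kronecker tableau of length k, initial shape (n) and final shape λ; that is, KT^k_{(n),λ} is empty. -/
open Finset

namespace KroneckerPaper

theorem rowLen_le_of_erase_subset {μ ν : YoungDiagram} {c : ℕ × ℕ}
    (h : μ.cells.erase c ⊆ ν.cells) (i : ℕ) : μ.rowLen i ≤ ν.rowLen i + 1 := by
  have hrow : μ.row i ⊆ insert c (ν.row i) := by
    rw [subset_insert_iff, YoungDiagram.row, ← filter_erase]
    exact filter_subset_filter _ h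
  calc μ.rowLen i = #(μ.row i) := μ.rowLen_eq_card
    _ ≤ #(insert c (ν.row i)) := card_le_card hrow
    _ ≤ #(ν.row i) + 1 := card_insert_le c _
    _ = ν.rowLen i + 1 := by rw [ν.rowLen_eq_card]

theorem MoveCorner.rowLen_le {μ ν : YoungDiagram} (h : MoveCorner μ ν) (i : ℕ) :
    μ.rowLen i ≤ ν.rowLen i + 1 := by
  obtain ⟨-, c, c', -, -, -, hν⟩ := h
  exact rowLen_le_of_erase_subset (hν ▸ subset_insert c' _) i

namespace KroneckerTableau

variable {k : ℕ} {μ lam : YoungDiagram}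

theorem rowLen_castSucc_le (T : KroneckerTableau k μ lam) (i : ℕ) (j : Fin k) :
    (T.seq j.castSucc).rowLen i ≤ (T.seq j.succ).rowLen i + 1 := by
  rcases T.step j with ⟨hmove, -⟩ | ⟨hstay, -⟩
  · exact hmove.rowLen_le i
  · rw [hstay]
    exact Nat.le_succ _

theorem rowLen_le_seq (T : KroneckerTableau k μ lam) (i : ℕ) (j : Fin (k + 1)) :
    μ.rowLen i ≤ (T.seq j).rowLen i + j := by
  induction j using Fin.induction with
  | zero => simp [T.init]
  | succ j ih =>
    calc μ.rowLen i ≤ (T.seq j.castSucc).rowLen i + j := ih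
      _ ≤ (T.seq j.succ).rowLen i + 1 + j := by gcongr; exact T.rowLen_castSucc_le i j
      _ = (T.seq j.succ).rowLen i + j.succ := by rw [Fin.val_succ]; ring

theorem rowLen_le (T : KroneckerTableau k μ lam) (i : ℕ) :
    μ.rowLen i ≤ lam.rowLen i + k := by
  simpa only [T.final, Fin.val_last] using T.rowLen_le_seq i (Fin.last k)

end KroneckerTableau

theorem rowLen_rowDiagram_zero (n : ℕ) : (rowDiagram n).rowLen 0 = n :=
  YoungDiagram.rowLen_ofRowLens (w := [n]) ⟨0, by simp⟩

theorem statement11_general (k i : ℕ) (μ lam : YoungDiagram)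
    (h : lam.rowLen i + k < μ.rowLen i) : IsEmpty (KroneckerTableau k μ lam) :=
  ⟨fun T => h.not_ge (T.rowLen_le i)⟩

/-- If `k < n - λ₁` then there is no Kronecker tableau of length `k`, initial shape `(n)`
and final shape `λ`. -/
theorem statement11 (n k : ℕ) (hn : 1 ≤ n) (hk : 1 ≤ k) (lam : YoungDiagram)
    (hcard : lam.card = n) (h : k < n - lam.rowLen 0) :
    IsEmpty (KroneckerTableau k (rowDiagram n) lam) := by
  refine statement11_general k 0 (rowDiagram n) lam ?_
  rwa [rowLen_rowDiagram_zero, ← Nat.lt_sub_iff_add_lt']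

end KroneckerPaper
end
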